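/- arXiv:1408.0529 — 2 statements merged into one kernel-verified Lean document; each statement's English description precedes it below -/
import Mathlib

section
/- Let π be an irreducible pair on a finite alphabet A. Then G(π) ⊆ Alt(A) if and only if Λ(π) is simple. -/
open Equiv

/-- A (labeled) pair on alphabet `A`: two bijections from `A` to positions.
Positions are `Fin (Fintype.card A)`, 0-indexed: position `j : Fin N`
corresponds to the position `j+1 ∈ {1,…,N}` of the paper. -/
abbrev RPair (A : Type*) [Fintype A] := Bool → (A ≃ Fin (Fintype.card A))

variable {A : Type*} [Fintype A]

/-- Irreducibility: `π₁(π₀⁻¹({1,…,k})) = {1,…,k}` only for `k = N`. -/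
def PairIrreducible (π : RPair A) : Prop :=
  ∀ k : Fin (Fintype.card A),
    (∀ x : A, π false x ≤ k → π true x ≤ k) → (k : ℕ) + 1 = Fintype.card A

/-- Type-ε right Rauzy induction sends `π` to `π'`.  Here `zc = π_ε⁻¹(N)` and
`zo = π_{1-ε}⁻¹(N)` are characterized as the letters of maximal position. -/
def RightMove (π π' : RPair A) : Prop :=
  ∃ ε : Bool, ∃ zc zo : A,
    (∀ x : A, π ε x ≤ π ε zc) ∧
    (∀ x : A, π (!ε) x ≤ π (!ε) zo) ∧
    π' ε = π ε ∧
    (∀ b : A, π (!ε) b ≤ π (!ε) zc → π' (!ε) b = π (!ε) b) ∧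
    ((π' (!ε) zo : ℕ) = (π (!ε) zc : ℕ) + 1) ∧
    (∀ b : A, ¬ π (!ε) b ≤ π (!ε) zc → b ≠ zo → (π' (!ε) b : ℕ) = (π (!ε) b : ℕ) + 1)

/-- Type-ε left Rauzy induction sends `π` to `π'`.  Here `ac = π_ε⁻¹(1)` and
`ao = π_{1-ε}⁻¹(1)` are characterized as the letters of minimal position. -/
def LeftMove (π π' : RPair A) : Prop :=
  ∃ ε : Bool, ∃ ac ao : A,
    (∀ x : A, π ε ac ≤ π ε x) ∧
    (∀ x : A, π (!ε) ao ≤ π (!ε) x) ∧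
    π' ε = π ε ∧
    (∀ b : A, π (!ε) ac ≤ π (!ε) b → π' (!ε) b = π (!ε) b) ∧
    ((π' (!ε) ao : ℕ) = (π (!ε) ac : ℕ) - 1) ∧
    (∀ b : A, ¬ π (!ε) ac ≤ π (!ε) b → b ≠ ao → (π' (!ε) b : ℕ) = (π (!ε) b : ℕ) - 1)

/-- The Rauzy class `R(π)`: pairs reachable by right Rauzy inductions. -/
def RClass (π : RPair A) : Set (RPair A) := {ρ | Relation.ReflTransGen RightMove π ρ}

/-- The extended Rauzy class `E(π)`: pairs reachable by left and right Rauzy inductions. -/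
def EClass (π : RPair A) : Set (RPair A) :=
  {ρ | Relation.ReflTransGen (fun x y => RightMove x y ∨ LeftMove x y) π ρ}

/-- `π ∘ ν = (π₀ ∘ ν, π₁ ∘ ν)`. -/
def pairRename (π : RPair A) (ν : Equiv.Perm A) : RPair A := fun ε => ν.trans (π ε)

/-- The renaming set `G(π) = {ν : π ∘ ν ∈ E(π)}`. -/
def renamings (π : RPair A) : Set (Equiv.Perm A) := {ν | pairRename π ν ∈ EClass π}

/-- The non-labeled permutation `π₁ ∘ π₀⁻¹`. -/
def nonlabeled (π : RPair A) : Equiv.Perm (Fin (Fintype.card A)) :=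
  (π false).symm.trans (π true)

/-- The position `1` (smallest). -/
def posFirst (A : Type*) [Fintype A] [Nonempty A] : Fin (Fintype.card A) :=
  ⟨0, Fintype.card_pos⟩

/-- The position `N` (largest). -/
def posLast (A : Type*) [Fintype A] [Nonempty A] : Fin (Fintype.card A) :=
  ⟨Fintype.card A - 1, Nat.sub_lt Fintype.card_pos Nat.one_pos⟩

/-- A pair is standard if `π₀(π₁⁻¹(1)) = π₁(π₀⁻¹(1)) = N`. -/
def PairStandard [Nonempty A] (π : RPair A) : Prop :=
  π false ((π true).symm (posFirst A)) = posLast A ∧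
  π true ((π false).symm (posFirst A)) = posLast A

/-- `S` is the permutation `S(π)` of the paper. -/
def IsS [Nonempty A] (π : RPair A) (S : Equiv.Perm A) : Prop :=
  ∀ b : A,
    (π true b = posFirst A → S b = (π false).symm (posFirst A)) ∧
    (π true b ≠ posFirst A →
      (((π true b : ℕ) = (π true ((π false).symm (posLast A)) : ℕ) + 1 →
        (π false (S b) : ℕ) = (π false ((π true).symm (posLast A)) : ℕ) + 1) ∧
      ((π true b : ℕ) ≠ (π true ((π false).symm (posLast A)) : ℕ) + 1 →
        (π false (S b) : ℕ) =
          (π false ((π true).symm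
            ⟨(π true b : ℕ) - 1,
              Nat.lt_of_le_of_lt (Nat.sub_le _ _) (π true b).isLt⟩) : ℕ) + 1)))

/-- The marked letter `X(π) = π₀⁻¹(1)`. -/
def XOf [Nonempty A] (π : RPair A) : A := (π false).symm (posFirst A)

/-- `Q` is the permutation `Q(π)` of the paper (constructed from `S = S(π)`). -/
def IsQ [Nonempty A] (π : RPair A) (S Q : Equiv.Perm A) : Prop :=
  Q (XOf π) = XOf π ∧
  ∀ b : A, b ≠ XOf π →
    (S b = XOf π → Q b = S (S b)) ∧ (S b ≠ XOf π → Q b = S b)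

/-- `Λ`: the multiset of cardinalities of the orbits of `Q` on `A ∖ {X}`
(for `Q` fixing `X`): the nontrivial cycle lengths of `Q` together with one `1`
for each fixed point of `Q` other than `X`. -/
def lamOf [DecidableEq A] (Q : Equiv.Perm A) : Multiset ℕ :=
  Q.cycleType + Multiset.replicate ((Finset.univ.filter fun a => Q a = a).card - 1) 1

/-- The centralizer `Z(π)` of `(X(π), Q(π))`. -/
def ZOf [Nonempty A] (π : RPair A) (Q : Equiv.Perm A) : Set (Equiv.Perm A) :=
  {ν | ν (XOf π) = XOf π ∧ ν⁻¹ * Q * ν = Q}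

set_option linter.unusedSectionVars false

section LinAlg
open Matrix
open scoped ComplexOrder

theorem rz_exists_mu {n : Type*} [Fintype n] [DecidableEq n] (M : Matrix n n ℂ) :
    ∃ μ : ℝ, 0 < μ ∧ ((algebraMap ℂ (Matrix n n ℂ) (μ : ℂ)) + M).det ≠ 0 := by
  by_contra! h
  have hp : (-M).charpoly ≠ 0 := (Matrix.charpoly_monic _).ne_zero
  have hfin : {x : ℂ | (-M).charpoly.IsRoot x}.Finite := Polynomial.finite_setOfPred_isRoot hp
  have hinf : (Set.range (fun k : ℕ => ((k + 1 : ℕ) : ℂ))).Infinite := by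
    apply Set.infinite_range_of_injective
    intro a b hab
    have h2 : ((a + 1 : ℕ) : ℂ) = ((b + 1 : ℕ) : ℂ) := hab
    have : a + 1 = b + 1 := by exact_mod_cast h2
    omega
  apply hinf
  apply hfin.subset
  rintro _ ⟨k, rfl⟩
  have := h (k + 1 : ℕ) (by positivity)
  simp only [Set.mem_ofPred_eq, Polynomial.IsRoot, Matrix.eval_charpoly]
  rw [sub_neg_eq_add]
  have e : (Matrix.scalar n) (((k + 1 : ℕ) : ℂ)) = algebraMap ℂ (Matrix n n ℂ) (((k + 1 : ℕ) : ℝ) : ℂ) := by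
    rw [Complex.ofReal_natCast]; rfl
  rw [e]; exact this

theorem rz_det_nondeg {n : Type*} [Fintype n] [DecidableEq n] (Ω R : Matrix n n ℝ)
    (hΩ : Ωᵀ = -Ω) (hu : IsUnit Ω.det) (hR : R * Ω * Rᵀ = Ω) : R.det = 1 := by
  have hRu : IsUnit R.det := by
    have := congrArg Matrix.det hR
    rw [det_mul, det_mul] at this
    have h2 := hu
    rw [← this] at h2
    exact isUnit_of_mul_isUnit_left (isUnit_of_mul_isUnit_left h2)
  -- complexify
  let f : ℝ →+* ℂ := Complex.ofRealHom
  let O : Matrix n n ℂ := Ω.map f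
  let S : Matrix n n ℂ := R.map f
  have hO : Oᵀ = -O := by
    have : Oᵀ = (Ωᵀ).map f := by simp [O, Matrix.transpose_map]
    rw [this, hΩ]; ext i j; simp [O]
  have hOdet : O.det = f Ω.det := (RingHom.map_det f Ω).symm
  have hSdet : S.det = f R.det := (RingHom.map_det f R).symm
  have hOu : IsUnit O.det := by rw [hOdet]; exact hu.map f
  have hSu : IsUnit S.det := by rw [hSdet]; exact hRu.map f
  have hS : S * O * Sᵀ = O := by
    have := congrArg (fun M => M.map f) hR
    simpa [Matrix.map_mul, Matrix.transpose_map, S, O] using this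
  have hOH : Oᴴ = -O := by
    rw [← hO]; ext i j; simp [O, f, Matrix.conjTranspose_apply]
  have hSH : Sᴴ = Sᵀ := by
    ext i j; simp [S, f, Matrix.conjTranspose_apply]
  obtain ⟨μ, hμ, hdet⟩ := rz_exists_mu (Complex.I • O)
  let m : ℂ := (μ : ℂ)
  have hm0 : m ≠ 0 := by simpa [m] using hμ.ne'
  have hmstar : star m = m := by simp [m]
  let P : Matrix n n ℂ := m • 1 + Complex.I • O
  let P' : Matrix n n ℂ := m • 1 - Complex.I • O
  have hPdet : P.det ≠ 0 := by
    have : P = (algebraMap ℂ (Matrix n n ℂ) (μ : ℂ)) + Complex.I • O := by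
      simp [P, m, Algebra.algebraMap_eq_smul_one]
    rwa [this]
  have hPT : Pᵀ = P' := by
    simp [P, P', hO, sub_eq_add_neg]
  have hP'T : P'ᵀ = P := by rw [← hPT, transpose_transpose]
  have hP'det : P'.det = P.det := by rw [← hPT, det_transpose]
  have hPu : IsUnit P.det := isUnit_iff_ne_zero.2 hPdet
  have hP'u : IsUnit P'.det := by rw [hP'det]; exact hPu
  have hPP : P * P' = P' * P := by
    simp only [P, P']; noncomm_ring; module
  have hPO : P * O = O * P := by
    simp only [P]; noncomm_ring
  have hP'O : P' * O = O * P' := by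
    simp only [P']; noncomm_ring
  -- D
  let Z : Matrix n n ℂ := m • (1 + S)
  let W : Matrix n n ℂ := (S - 1) * O
  have hD : P' + S * P = Z + Complex.I • W := by
    simp only [P, P', Z, W]
    simp only [mul_add, Matrix.mul_smul, Matrix.mul_one, sub_mul, Matrix.one_mul, smul_sub,
      smul_add]
    abel
  have hZW : W * Zᴴ = Z * Wᴴ := by
    simp only [Z, W, conjTranspose_mul, conjTranspose_smul, conjTranspose_add, conjTranspose_sub,
      conjTranspose_one, hOH, hSH, hmstar]
    simp only [Matrix.mul_smul, Matrix.smul_mul]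
    congr 1
    have : S * (O * Sᵀ) = O := by rw [← Matrix.mul_assoc, hS]
    simp only [mul_add, add_mul, sub_mul, mul_sub, Matrix.mul_one, Matrix.one_mul,
      Matrix.neg_mul, Matrix.mul_neg, Matrix.mul_assoc, this]
    abel
  have hDD : (P' + S * P) * (P' + S * P)ᴴ = Z * Zᴴ + W * Wᴴ := by
    rw [hD]
    simp only [conjTranspose_add, conjTranspose_smul, mul_add, add_mul, Matrix.mul_smul,
      Matrix.smul_mul, hZW, smul_smul]
    simp [Complex.I_mul_I]
  have hDdet : (P' + S * P).det ≠ 0 := by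
    intro h0
    obtain ⟨v, hv, hvD⟩ := Matrix.exists_vecMul_eq_zero_iff.2 h0
    have h1 : v ᵥ* ((P' + S * P) * (P' + S * P)ᴴ) ⬝ᵥ star v = 0 := by
      rw [← vecMul_vecMul, hvD]; simp
    rw [hDD, vecMul_add, add_dotProduct, ← vecMul_vecMul, ← vecMul_vecMul] at h1
    have key : ∀ Y : Matrix n n ℂ, (v ᵥ* Y) ᵥ* Yᴴ ⬝ᵥ star v = (v ᵥ* Y) ⬝ᵥ star (v ᵥ* Y) := by
      intro Y
      rw [← dotProduct_mulVec, star_vecMul]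
    rw [key, key] at h1
    have e1 : 0 ≤ (v ᵥ* Z) ⬝ᵥ star (v ᵥ* Z) := by
      rw [dotProduct_comm]; exact dotProduct_star_self_nonneg _
    have e2 : 0 ≤ (v ᵥ* W) ⬝ᵥ star (v ᵥ* W) := by
      rw [dotProduct_comm]; exact dotProduct_star_self_nonneg _
    have hz : (v ᵥ* Z) = 0 := by
      apply dotProduct_star_self_eq_zero.1; rw [dotProduct_comm]
      exact ((add_eq_zero_iff_of_nonneg e1 e2).1 h1).1
    have hw : (v ᵥ* W) = 0 := by
      apply dotProduct_star_self_eq_zero.1; rw [dotProduct_comm]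
      exact ((add_eq_zero_iff_of_nonneg e1 e2).1 h1).2
    have hvS : v ᵥ* S = -v := by
      simp only [Z, vecMul_smul, vecMul_add, vecMul_one] at hz
      have := (smul_eq_zero.1 hz).resolve_left hm0
      exact eq_neg_of_add_eq_zero_right this
    simp only [W, ← vecMul_vecMul, vecMul_sub, hvS, vecMul_one] at hw
    have h3 : (-v - v) = 0 := by
      by_contra hne
      exact hOu.ne_zero (Matrix.exists_vecMul_eq_zero_iff.1 ⟨_, hne, hw⟩)
    apply hv
    have h4 : (-2 : ℂ) • v = 0 := by rw [← h3]; module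
    exact (smul_eq_zero.1 h4).resolve_left (by norm_num)
  let T : Matrix n n ℂ := P' * P⁻¹
  have hTdet : T.det = 1 := by
    simp only [T, det_mul, hP'det, det_nonsing_inv]
    exact Ring.mul_inverse_cancel _ hPu
  have hPinvO : P⁻¹ * O = O * P⁻¹ := by
    calc P⁻¹ * O = P⁻¹ * (O * (P * P⁻¹)) := by rw [mul_nonsing_inv _ hPu, Matrix.mul_one]
      _ = P⁻¹ * ((P * O) * P⁻¹) := by rw [hPO]; simp only [Matrix.mul_assoc]
      _ = (P⁻¹ * P) * (O * P⁻¹) := by simp only [Matrix.mul_assoc]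
      _ = _ := by rw [nonsing_inv_mul _ hPu, Matrix.one_mul]
  have hTO : T * O = O * T := by
    simp only [T]
    rw [Matrix.mul_assoc, hPinvO, ← Matrix.mul_assoc, hP'O, Matrix.mul_assoc]
  have hTD : (T + S) * P = P' + S * P := by
    simp only [T]
    rw [add_mul, Matrix.mul_assoc, nonsing_inv_mul _ hPu, Matrix.mul_one]
  have hTSdet : (T + S).det ≠ 0 := by
    intro h0
    apply hDdet
    rw [← hTD, det_mul, h0, zero_mul]
  have hTT : Tᵀ * T = 1 := by
    simp only [T, transpose_mul, transpose_nonsing_inv, hPT, hP'T]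
    rw [Matrix.mul_assoc, ← Matrix.mul_assoc P, hPP, Matrix.mul_assoc P', mul_nonsing_inv _ hPu,
      Matrix.mul_one, nonsing_inv_mul _ hP'u]
  have hTT' : T * Tᵀ = 1 := mul_eq_one_comm.1 hTT
  have hSTu : IsUnit (Sᵀ).det := by rw [det_transpose]; exact hSu
  have e1 : (T + S) * O = O * (T + (Sᵀ)⁻¹) := by
    rw [add_mul, mul_add, hTO]
    congr 1
    calc S * O = (S * O * Sᵀ) * (Sᵀ)⁻¹ := by
          rw [Matrix.mul_assoc, mul_nonsing_inv _ hSTu, Matrix.mul_one]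
      _ = _ := by rw [hS]
  have e2 : (T + S).det = (T + (Sᵀ)⁻¹).det := by
    have := congrArg Matrix.det e1
    rw [det_mul, det_mul, mul_comm] at this
    exact mul_left_cancel₀ hOu.ne_zero this
  have e3 : (T + (Sᵀ)⁻¹).det = (Tᵀ + S⁻¹).det := by
    rw [← det_transpose]; simp [transpose_nonsing_inv]
  have e4 : T * (Tᵀ + S⁻¹) * S = T + S := by
    rw [mul_add, hTT', add_mul, Matrix.one_mul, Matrix.mul_assoc, nonsing_inv_mul _ hSu,
      Matrix.mul_one, add_comm]
  have e5 := congrArg Matrix.det e4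
  rw [det_mul, det_mul, hTdet, one_mul, ← e3, ← e2] at e5
  have e6 : S.det = 1 := by
    have : (T + S).det * S.det = (T + S).det * 1 := by rw [e5, mul_one]
    exact mul_left_cancel₀ hTSdet this
  rw [hSdet] at e6
  have e7 : ((R.det : ℝ) : ℂ) = ((1 : ℝ) : ℂ) := by rw [Complex.ofReal_one]; exact e6
  exact Complex.ofReal_injective e7

theorem rz_det_form {V : Type*} [AddCommGroup V] [Module ℝ V] [FiniteDimensional ℝ V]
    (B : V →ₗ[ℝ] V →ₗ[ℝ] ℝ) (hB : ∀ x y, B x y = - B y x) (R : V →ₗ[ℝ] V)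
    (hR : ∀ x y, B (R x) (R y) = B x y) (hK : ∀ x, (∀ y, B x y = 0) → R x = x) :
    LinearMap.det R = 1 := by
  classical
  let W : Submodule ℝ V := LinearMap.ker B
  have hW : ∀ x, x ∈ W ↔ ∀ y, B x y = 0 := by
    intro x; simp only [W, LinearMap.mem_ker, LinearMap.ext_iff, LinearMap.zero_apply]
  have hfix : ∀ x ∈ W, R x = x := fun x hx => hK x ((hW x).1 hx)
  have he : W ≤ W.comap R := by
    intro x hx; simp only [Submodule.mem_comap]; rw [hfix x hx]; exact hx
  rw [LinearMap.det_eq_det_mul_det W R he]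
  have h1 : R.restrict he = LinearMap.id := by
    ext x; simp [LinearMap.restrict_apply, hfix x x.2]
  rw [h1, LinearMap.det_id, one_mul]
  -- form on the quotient
  let B1 : V →ₗ[ℝ] (V ⧸ W) →ₗ[ℝ] ℝ :=
    { toFun := fun x => W.liftQ (B x) (by
        intro y hy; rw [LinearMap.mem_ker, hB, (hW y).1 hy x, neg_zero])
      map_add' := by intro x y; ext z; simp
      map_smul' := by intro x y; ext z; simp }
  have hB1 : ∀ x y, B1 x (Submodule.Quotient.mk y) = B x y := fun x y => rfl
  let B2 : (V ⧸ W) →ₗ[ℝ] (V ⧸ W) →ₗ[ℝ] ℝ := W.liftQ B1 (by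
    intro x hx; rw [LinearMap.mem_ker]; ext y; exact (hW x).1 hx y)
  have hB2 : ∀ x y, B2 (Submodule.Quotient.mk x) (Submodule.Quotient.mk y) = B x y :=
    fun x y => rfl
  let b := Module.finBasis ℝ (V ⧸ W)
  let Ω := LinearMap.toMatrix₂ b b B2
  let g := W.mapQ W R he
  let M := LinearMap.toMatrix b b g
  have hg : ∀ x y, B2 (g x) (g y) = B2 x y := by
    intro x y
    obtain ⟨x, rfl⟩ := Submodule.Quotient.mk_surjective _ x
    obtain ⟨y, rfl⟩ := Submodule.Quotient.mk_surjective _ y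
    simp only [g, Submodule.mapQ_apply, hB2, hR]
  have hcomp : B2.compl₁₂ g g = B2 := by
    ext x y; simp [hg]
  have hM : Mᵀ * Ω * M = Ω := by
    have := LinearMap.toMatrix₂_compl₁₂ b b b b B2 g g
    rw [hcomp] at this
    exact this.symm
  have hskew : Ωᵀ = -Ω := by
    ext i j
    simp only [Ω, Matrix.transpose_apply, Matrix.neg_apply, LinearMap.toMatrix₂_apply]
    obtain ⟨x, hx⟩ := Submodule.Quotient.mk_surjective _ (b i)
    obtain ⟨y, hy⟩ := Submodule.Quotient.mk_surjective _ (b j)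
    rw [← hx, ← hy, hB2, hB2, hB]
  have hnd : IsUnit Ω.det := by
    rw [isUnit_iff_ne_zero]
    have hsep : B2.SeparatingLeft := by
      intro x hx
      obtain ⟨x, rfl⟩ := Submodule.Quotient.mk_surjective _ x
      rw [Submodule.Quotient.mk_eq_zero, hW]
      intro y; exact hx (Submodule.Quotient.mk y)
    exact (LinearMap.separatingLeft_iff_det_ne_zero b).1 hsep
  have := rz_det_nondeg Ω Mᵀ hskew hnd (by rw [transpose_transpose]; exact hM)
  rw [det_transpose] at this
  rw [← LinearMap.det_toMatrix b]
  exact this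
end LinAlg



section Potential

/-- Partial sums in the row `e`. -/
def rzh (e : A ≃ Fin (Fintype.card A)) (v : A → ℝ) (x : A) : ℝ :=
  ∑ y, if e y < e x then v y else 0

theorem rzh_add_last (e : A ≃ Fin (Fintype.card A)) (v : A → ℝ) (z : A)
    (hz : ∀ x, e x ≤ e z) : rzh e v z + v z = ∑ y, v y := by
  classical
  have : v z = ∑ y, if y = z then v y else 0 := by simp
  rw [rzh, this, ← Finset.sum_add_distrib]
  apply Finset.sum_congr rfl
  intro y _
  by_cases h : y = z
  · subst h; simp
  · have : e y < e z := lt_of_le_of_ne (hz y) (fun h' => h (e.injective h'))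
    simp [h, this]

theorem rzh_add (e : A ≃ Fin (Fintype.card A)) (u v : A → ℝ) :
    rzh e (u + v) = rzh e u + rzh e v := by
  funext x
  simp only [rzh, Pi.add_apply, ← Finset.sum_add_distrib]
  apply Finset.sum_congr rfl
  intro y _
  split_ifs <;> simp

theorem rzh_smul (e : A ≃ Fin (Fintype.card A)) (c : ℝ) (v : A → ℝ) :
    rzh e (c • v) = c • rzh e v := by
  funext x
  simp only [rzh, Pi.smul_apply, smul_eq_mul, Finset.mul_sum]
  apply Finset.sum_congr rfl
  intro y _
  split_ifs <;> simp

/-- The alternating form. -/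
noncomputable def rzform (π : RPair A) : (A → ℝ) →ₗ[ℝ] (A → ℝ) →ₗ[ℝ] ℝ :=
  LinearMap.mk₂ ℝ (fun u v => ∑ x, v x * (rzh (π true) u x - rzh (π false) u x))
    (by intro u u' v
        simp only [rzh_add, Pi.add_apply, ← Finset.sum_add_distrib]
        exact Finset.sum_congr rfl fun x _ => by ring)
    (by intro c u v
        simp only [rzh_smul, Pi.smul_apply, smul_eq_mul, Finset.mul_sum]
        exact Finset.sum_congr rfl fun x _ => by ring)
    (by intro u v v'
        simp only [Pi.add_apply, ← Finset.sum_add_distrib]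
        exact Finset.sum_congr rfl fun x _ => by ring)
    (by intro c u v
        simp only [Pi.smul_apply, smul_eq_mul, Finset.mul_sum]
        exact Finset.sum_congr rfl fun x _ => by ring)

theorem rzform_apply (π : RPair A) (u v : A → ℝ) :
    rzform π u v = ∑ x, v x * (rzh (π true) u x - rzh (π false) u x) := rfl

theorem rzform_skew (π : RPair A) (u v : A → ℝ) : rzform π u v = - rzform π v u := by
  rw [eq_neg_iff_add_eq_zero]
  have key : ∀ e : A ≃ Fin (Fintype.card A), ∑ x, v x * rzh e u x + ∑ x, u x * rzh e v x
      = (∑ x, u x) * (∑ y, v y) - ∑ x, u x * v x := by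
    intro e
    classical
    have h2 : ∑ x, u x * v x = ∑ x, ∑ y, if y = x then u x * v y else 0 := by simp
    simp only [rzh, Finset.mul_sum, h2, Finset.sum_mul]
    have : ∀ x y : A, (v y * if e x < e y then u x else 0) + (u x * if e y < e x then v y else 0)
        = u x * v y - if y = x then u x * v y else 0 := by
      intro x y
      rcases lt_trichotomy (e x) (e y) with h | h | h
      · have h1 : y ≠ x := by rintro rfl; exact lt_irrefl _ h
        simp [h, h.le, h1, not_lt.2 h.le]; ring
      · have := e.injective h; subst this; simp
      · have h1 : y ≠ x := by rintro rfl; exact lt_irrefl _ h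
        simp [h, h1, not_lt.2 h.le]
    rw [Finset.sum_comm, ← Finset.sum_add_distrib, Finset.sum_comm (f := fun i j => u j * v i),
      ← Finset.sum_sub_distrib]
    refine Finset.sum_congr rfl fun x _ => ?_
    rw [← Finset.sum_add_distrib, ← Finset.sum_sub_distrib]
    exact Finset.sum_congr rfl fun y _ => this x y
  have h1 := key (π true)
  have h0 := key (π false)
  simp only [rzform_apply, mul_sub, Finset.sum_sub_distrib]
  linarith

/-- Kernel. -/
def rzK (π : RPair A) (u : A → ℝ) : Prop := ∀ x, rzh (π true) u x = rzh (π false) u x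

theorem rzK_iff (π : RPair A) (u : A → ℝ) : rzK π u ↔ ∀ v, rzform π u v = 0 := by
  classical
  constructor
  · intro h v
    rw [rzform_apply]
    exact Finset.sum_eq_zero fun x _ => by rw [h x]; ring
  · intro h x
    have := h (Pi.single x 1)
    rw [rzform_apply] at this
    simp only [Pi.single_apply, ite_mul, one_mul, zero_mul, Finset.sum_ite_eq', Finset.mem_univ,
      if_true] at this
    linarith

/-- The elementary transformation. -/
noncomputable def rzg [DecidableEq A] (w l : A) : (A → ℝ) →ₗ[ℝ] (A → ℝ) :=
  LinearMap.transvection (-(LinearMap.proj l : (A → ℝ) →ₗ[ℝ] ℝ)) (Pi.single w 1)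

theorem rzg_apply [DecidableEq A] (w l : A) (u : A → ℝ) (y : A) :
    rzg w l u y = u y - if y = w then u l else 0 := by
  simp [rzg, LinearMap.transvection.apply, Pi.single_apply, sub_eq_add_neg]

theorem rzg_det [DecidableEq A] (w l : A) (h : w ≠ l) : LinearMap.det (rzg w l) = 1 := by
  rw [rzg, LinearMap.transvection.det]
  simp [h.symm]

theorem rz_same_row [DecidableEq A] (e : A ≃ Fin (Fintype.card A)) (w l : A) (hw : ∀ x, e x ≤ e w)
    (u : A → ℝ) : rzh e (rzg w l u) = rzh e u := by
  funext x
  unfold rzh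
  apply Finset.sum_congr rfl
  intro y _
  rw [rzg_apply]
  by_cases h : y = w
  · subst h; simp [not_lt.2 (hw x)]
  · simp [h]

theorem rz_other_row [DecidableEq A] (p p' : A ≃ Fin (Fintype.card A)) (w l : A)
    (hl : ∀ x, p x ≤ p l)
    (h1 : ∀ b, p b ≤ p w → p' b = p b) (h2 : (p' l : ℕ) = (p w : ℕ) + 1)
    (h3 : ∀ b, ¬ p b ≤ p w → b ≠ l → (p' b : ℕ) = (p b : ℕ) + 1) (u : A → ℝ) :
    (∀ x, x ≠ l → rzh p' (rzg w l u) x = rzh p u x) ∧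
      rzh p' (rzg w l u) l = rzh p u w + u w - u l := by
  have hwl : w ≠ l := by
    rintro rfl
    rw [h1 w le_rfl] at h2; omega
  have hpl : ∀ x, x ≠ l → (p x : ℕ) < p l := fun x hx =>
    lt_of_le_of_ne (hl x) (fun h => hx (p.injective (Fin.ext h)))
  have hc : ∀ x, x ≠ l → ((p x : ℕ) ≤ p w ∧ (p' x : ℕ) = p x) ∨
      ((p w : ℕ) < p x ∧ (p' x : ℕ) = p x + 1) := by
    intro x hx
    by_cases h : p x ≤ p w
    · left; exact ⟨h, by rw [h1 x h]⟩
    · right; exact ⟨not_le.1 h, h3 x h hx⟩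
  constructor
  · intro x hx
    have key : ∀ y, (if p' y < p' x then rzg w l u y else 0) =
        (if p y < p x then u y else 0) + (if y = l then (if p w < p x then u l else 0) else 0)
          - (if y = w then (if p w < p x then u l else 0) else 0) := by
      intro y
      rw [rzg_apply]
      by_cases hyl : y = l
      · subst hyl
        have e1 : ¬ p y < p x := not_lt.2 (hl x)
        have e2 : (p' y < p' x) ↔ p w < p x := by
          rw [Fin.lt_def, Fin.lt_def]
          rcases hc x hx with h | h <;> omega
        simp [e1, e2, hwl.symm]
      · have e2 : (p' y < p' x) ↔ p y < p x := by
          rw [Fin.lt_def, Fin.lt_def]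
          rcases hc x hx with h | h <;> rcases hc y hyl with h' | h' <;> omega
        simp only [e2, hyl]
        by_cases hyw : y = w
        · subst hyw; simp; split_ifs <;> simp
        · simp [hyw]
    unfold rzh
    rw [Finset.sum_congr rfl fun y _ => key y, Finset.sum_sub_distrib, Finset.sum_add_distrib]
    simp
  · have key : ∀ y, (if p' y < p' l then rzg w l u y else 0) =
        (if p y < p w then u y else 0) + (if y = w then u w - u l else 0) := by
      intro y
      rw [rzg_apply]
      by_cases hyl : y = l
      · subst hyl
        simp [hwl.symm, not_lt.2 (hl w)]
      · by_cases hyw : y = w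
        · subst hyw
          have : p' y < p' l := by
            rw [Fin.lt_def]; rcases hc y hyl with h' | h' <;> omega
          simp [this]
        · have e2 : (p' y < p' l) ↔ p y < p w := by
            rw [Fin.lt_def, Fin.lt_def]
            have : (p y : ℕ) ≠ p w := fun h => hyw (p.injective (Fin.ext h))
            rcases hc y hyl with h' | h' <;> omega
          simp [e2, hyw]
    unfold rzh
    rw [Finset.sum_congr rfl fun y _ => key y, Finset.sum_add_distrib]
    simp; ring

theorem rz_delta [DecidableEq A] (w l : A) (u v : A → ℝ) (hE hO hE' hO' : A → ℝ) (T : ℝ)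
    (hwl : w ≠ l)
    (e1 : hE' = hE) (e2 : ∀ x, x ≠ l → hO' x = hO x) (e3 : hO' l = hO w + u w - u l)
    (t1 : hE w + u w = T) (t2 : hO l + u l = T) :
    ∑ x, rzg w l v x * (hO' x - hE' x) = ∑ x, v x * (hO x - hE x) := by
  have key : ∀ x, rzg w l v x * (hO' x - hE' x) = v x * (hO x - hE x)
      + (if x = l then v l * (hO w - hE w) else 0) - (if x = w then v l * (hO w - hE w) else 0) := by
    intro x
    rw [rzg_apply, e1]
    by_cases hxl : x = l
    · subst hxl
      simp only [hwl.symm, if_false, if_true, e3]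
      have : hO w + u w - u x - hE x = (hO x - hE x) + (hO w - hE w) := by linarith
      rw [this]; ring
    · rw [e2 x hxl]
      by_cases hxw : x = w
      · subst hxw; simp [hxl]; ring
      · simp [hxl, hxw]
  rw [Finset.sum_congr rfl fun x _ => key x, Finset.sum_sub_distrib, Finset.sum_add_distrib]
  simp

theorem rz_right [DecidableEq A] {π π' : RPair A} (h : RightMove π π') :
    ∃ g : (A → ℝ) →ₗ[ℝ] (A → ℝ), LinearMap.det g = 1 ∧
      (∀ u v, rzform π' (g u) (g v) = rzform π u v) ∧
      (∀ u, rzK π u → rzK π' (g u) ∧ ∀ x, rzh (π' false) (g u) x = rzh (π false) u x) := by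
  obtain ⟨ε, w, l, hw, hl, h0, h1, h2, h3⟩ := h
  have hwl : w ≠ l := by
    rintro rfl
    rw [h1 w le_rfl] at h2; omega
  have hform : ∀ u v, rzform π' (rzg w l u) (rzg w l v) = rzform π u v := by
    intro u v
    have a1 : rzh (π' ε) (rzg w l u) = rzh (π ε) u := by rw [h0]; exact rz_same_row _ _ _ hw u
    obtain ⟨a2, a3⟩ := rz_other_row (π (!ε)) (π' (!ε)) w l hl h1 h2 h3 u
    have := rz_delta w l u v (rzh (π ε) u) (rzh (π (!ε)) u) _ _ (∑ y, u y) hwl a1 a2 a3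
      (rzh_add_last _ _ _ hw) (rzh_add_last _ _ _ hl)
    rw [rzform_apply, rzform_apply]
    cases ε
    · exact this
    · simp only [Bool.not_true] at this
      rw [← neg_inj, ← Finset.sum_neg_distrib, ← Finset.sum_neg_distrib]
      simp only [← mul_neg, neg_sub]
      exact this
  refine ⟨rzg w l, rzg_det w l hwl, hform, ?_⟩
  intro u hu
  have a1 : rzh (π' ε) (rzg w l u) = rzh (π ε) u := by rw [h0]; exact rz_same_row _ _ _ hw u
  obtain ⟨a2, a3⟩ := rz_other_row (π (!ε)) (π' (!ε)) w l hl h1 h2 h3 u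
  have hu' : ∀ x, rzh (π (!ε)) u x = rzh (π ε) u x := by
    intro x; cases ε
    · exact hu x
    · exact (hu x).symm
  have t1 := rzh_add_last _ u _ hw
  have t2 := rzh_add_last _ u _ hl
  have hall : ∀ x, rzh (π' (!ε)) (rzg w l u) x = rzh (π (!ε)) u x := by
    intro x
    by_cases hx : x = l
    · subst hx; rw [a3, hu' w]; linarith
    · exact a2 x hx
  have hall' : ∀ x, rzh (π' (!ε)) (rzg w l u) x = rzh (π' ε) (rzg w l u) x := by
    intro x; rw [hall x, hu' x, a1]
  cases ε
  · exact ⟨hall', fun x => congrFun a1 x⟩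
  · exact ⟨fun x => (hall' x).symm, fun x => hall x⟩

end Potential


section LeftM

/-- Reversal of a pair. -/
def rzrev (π : RPair A) : RPair A := fun ε => (π ε).trans Fin.revPerm

theorem rzrev_val (π : RPair A) (ε : Bool) (x : A) :
    ((rzrev π ε x : Fin _) : ℕ) = Fintype.card A - (π ε x + 1) := by
  simp [rzrev, Fin.val_rev]

theorem rzh_rev (π : RPair A) (ε : Bool) (u : A → ℝ) (x : A) :
    rzh (rzrev π ε) u x = (∑ y, u y) - rzh (π ε) u x - u x := by
  classical
  have : u x = ∑ y, if y = x then u y else 0 := by simp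
  rw [this, rzh, rzh, ← Finset.sum_sub_distrib, ← Finset.sum_sub_distrib]
  refine Finset.sum_congr rfl fun y _ => ?_
  have e : (rzrev π ε y < rzrev π ε x) ↔ π ε x < π ε y := by
    simp [rzrev]
  rw [if_congr e rfl rfl]
  rcases lt_trichotomy (π ε x) (π ε y) with h | h | h
  · have h1 : y ≠ x := by rintro rfl; exact lt_irrefl _ h
    simp [h, h1, not_lt.2 h.le]
  · have := (π ε).injective h; subst this; simp
  · have h1 : y ≠ x := by rintro rfl; exact lt_irrefl _ h
    simp [h, h1, not_lt.2 h.le]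

theorem rzform_rev (π : RPair A) (u v : A → ℝ) : rzform (rzrev π) u v = - rzform π u v := by
  rw [rzform_apply, rzform_apply, ← Finset.sum_neg_distrib]
  refine Finset.sum_congr rfl fun y _ => ?_
  rw [rzh_rev, rzh_rev]; ring

theorem rzK_rev (π : RPair A) (u : A → ℝ) : rzK (rzrev π) u ↔ rzK π u := by
  unfold rzK
  refine forall_congr' fun x => ?_
  rw [rzh_rev, rzh_rev]
  constructor <;> intro h <;> linarith

theorem rz_left_rev {π π' : RPair A} (h : LeftMove π π') :
    π' = π ∨ RightMove (rzrev π) (rzrev π') := by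
  obtain ⟨ε, w, l, hw, hl, h0, h1, h2, h3⟩ := h
  by_cases hwl : w = l
  · left
    subst hwl
    have : π' (!ε) = π (!ε) := Equiv.ext fun b => h1 b (hl b)
    funext δ
    rcases Bool.eq_or_eq_not δ ε with rfl | rfl
    · exact h0
    · exact this
  · right
    have hlt : (π (!ε) l : ℕ) < π (!ε) w :=
      lt_of_le_of_ne (hl w) (fun h => hwl ((π (!ε)).injective (Fin.ext h)).symm)
    refine ⟨ε, w, l, ?_, ?_, ?_, ?_, ?_, ?_⟩
    · intro x; simpa [rzrev] using hw x
    · intro x; simpa [rzrev] using hl x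
    · simp only [rzrev, h0]
    · intro b hb
      have hb' : π (!ε) w ≤ π (!ε) b := by simpa [rzrev] using hb
      simp [rzrev, h1 b hb']
    · have := (π (!ε) w).isLt
      rw [rzrev_val, rzrev_val, h2]; omega
    · intro b hb hbl
      have hb' : ¬ π (!ε) w ≤ π (!ε) b := by simpa [rzrev] using hb
      have hlb : (π (!ε) l : ℕ) < π (!ε) b :=
        lt_of_le_of_ne (hl b) (fun h => hbl ((π (!ε)).injective (Fin.ext h)).symm)
      have := (π (!ε) b).isLt
      rw [rzrev_val, rzrev_val, h3 b hb' hbl]; omega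

theorem rz_left [DecidableEq A] {π π' : RPair A} (h : LeftMove π π') :
    ∃ g : (A → ℝ) →ₗ[ℝ] (A → ℝ), LinearMap.det g = 1 ∧
      (∀ u v, rzform π' (g u) (g v) = rzform π u v) ∧
      (∀ u, rzK π u → rzK π' (g u) ∧ ∀ x, rzh (π' false) (g u) x + g u x - ∑ y, g u y
        = rzh (π false) u x + u x - ∑ y, u y) := by
  rcases rz_left_rev h with rfl | h
  · exact ⟨LinearMap.id, LinearMap.det_id, fun _ _ => rfl, fun u hu => ⟨hu, fun _ => rfl⟩⟩
  · obtain ⟨g, g1, g2, g3⟩ := rz_right h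
    refine ⟨g, g1, ?_, ?_⟩
    · intro u v
      have := g2 u v
      rw [rzform_rev, rzform_rev] at this
      linarith
    · intro u hu
      obtain ⟨k1, k2⟩ := g3 u ((rzK_rev _ _).2 hu)
      refine ⟨(rzK_rev _ _).1 k1, fun x => ?_⟩
      have := k2 x
      rw [rzh_rev, rzh_rev] at this
      linarith

theorem rz_partial (e : A ≃ Fin (Fintype.card A)) (u : A → ℝ) :
    (Finset.univ.val.map (fun b => rzh e u b + u b)) + {0}
      = Finset.univ.val.map (rzh e u) + {∑ y, u y} := by
  classical
  let p : ℕ → ℝ := fun k => ∑ y, if (e y : ℕ) < k then u y else 0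
  have hr : Finset.univ.val.map (fun x => (e x : ℕ)) = Multiset.range (Fintype.card A) := by
    rw [Multiset.Nodup.ext]
    · intro k
      simp only [Multiset.mem_map, Finset.mem_val, Finset.mem_univ, true_and, Multiset.mem_range]
      constructor
      · rintro ⟨a, rfl⟩; exact (e a).isLt
      · intro hk; exact ⟨e.symm ⟨k, hk⟩, by simp⟩
    · exact Finset.univ.nodup.map fun a b h => e.injective (Fin.ext h)
    · exact Multiset.nodup_range _
  have h1 : Finset.univ.val.map (rzh e u) = (Multiset.range (Fintype.card A)).map p := by
    rw [← hr, Multiset.map_map]; rfl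
  have h2 : (Finset.univ.val.map (fun b => rzh e u b + u b))
      = (Multiset.range (Fintype.card A)).map (fun k => p (k + 1)) := by
    rw [← hr, Multiset.map_map]
    refine Multiset.map_congr rfl fun x _ => ?_
    have : u x = ∑ y, if y = x then u y else 0 := by simp
    simp only [Function.comp, p]
    rw [this, rzh, ← Finset.sum_add_distrib]
    refine Finset.sum_congr rfl fun y _ => ?_
    by_cases hyx : y = x
    · subst hyx; simp
    · have : (e y : ℕ) ≠ e x := fun h => hyx (e.injective (Fin.ext h))
      have e2 : e y < e x ↔ (e y : ℕ) < e x + 1 := by rw [Fin.lt_def]; omega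
      rw [if_congr e2 rfl rfl]; simp [hyx]
  have h3 : (∑ y, u y) = p (Fintype.card A) := by
    simp [p]
  have h4 : (0 : ℝ) = p 0 := by simp [p]
  rw [h1, h2, h3, h4]
  have e1 : (Multiset.range (Fintype.card A + 1)).map p =
      (Multiset.range (Fintype.card A)).map p + {p (Fintype.card A)} := by
    rw [Multiset.range_succ, Multiset.map_cons, add_comm]; rfl
  rw [← e1]
  have e2 : Multiset.range (Fintype.card A + 1) =
      (Multiset.range (Fintype.card A)).map (· + 1) + {0} := by
    rw [Multiset.range, Multiset.range, List.range_succ_eq_map, add_comm]; rfl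
  rw [e2, Multiset.map_add, Multiset.map_map]; rfl

/-- Multiset relation. -/
def rzmrel (h h' : A → ℝ) : Prop :=
  ∃ t : ℝ, Finset.univ.val.map h' + {t} = Finset.univ.val.map (fun b => h b + t) + {0}

theorem rzmrel_trans {h h' h'' : A → ℝ} (a : rzmrel h h') (b : rzmrel h' h'') : rzmrel h h'' := by
  obtain ⟨t, ht⟩ := a
  obtain ⟨s, hs⟩ := b
  refine ⟨t + s, ?_⟩
  have h1 := congrArg (Multiset.map (· + s)) ht
  simp only [Multiset.map_add, Multiset.map_map, Multiset.map_singleton, zero_add] at h1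
  have h2 : Finset.univ.val.map h'' + {s} + {t + s} =
      Finset.univ.val.map (fun b => h b + (t + s)) + {0} + {s} := by
    rw [hs]
    have : Multiset.map (fun b => h' b + s) Finset.univ.val + {t + s} =
        Finset.univ.val.map (fun b => h b + (t + s)) + {s} := by
      have e : (fun b => h b + (t + s)) = ((fun x => x + s) ∘ fun b => h b + t) := by
        funext b; simp [add_assoc]
      rw [e]; exact h1
    rw [add_right_comm, this, add_right_comm]
  rw [add_right_comm] at h2
  exact add_right_cancel h2

/-- Connection between pairs. -/
def rzConn (π π' : RPair A) : Prop :=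
  ∃ g : (A → ℝ) →ₗ[ℝ] (A → ℝ), LinearMap.det g = 1 ∧
      (∀ u v, rzform π' (g u) (g v) = rzform π u v) ∧
      (∀ u, rzK π u → rzK π' (g u) ∧ rzmrel (rzh (π false) u) (rzh (π' false) (g u)))

theorem rzConn_of_move {π π' : RPair A} (h : RightMove π π' ∨ LeftMove π π') : rzConn π π' := by
  classical
  rcases h with h | h
  · obtain ⟨g, g1, g2, g3⟩ := rz_right h
    refine ⟨g, g1, g2, fun u hu => ⟨(g3 u hu).1, 0, ?_⟩⟩
    have : rzh (π' false) (g u) = rzh (π false) u := funext (g3 u hu).2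
    rw [this]; simp
  · obtain ⟨g, g1, g2, g3⟩ := rz_left h
    refine ⟨g, g1, g2, fun u hu => ⟨(g3 u hu).1, ∑ y, g u y - ∑ y, u y, ?_⟩⟩
    have p' := rz_partial (π' false) (g u)
    have p := rz_partial (π false) u
    have hx := (g3 u hu).2
    set t := ∑ y, g u y - ∑ y, u y with ht
    have p2 := congrArg (Multiset.map (· + t)) p
    simp only [Multiset.map_add, Multiset.map_map, Multiset.map_singleton, zero_add] at p2
    have e1 : Multiset.map ((fun x => x + t) ∘ fun b => rzh (π false) u b + u b) Finset.univ.val =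
        Finset.univ.val.map (fun b => rzh (π' false) (g u) b + g u b) := by
      refine Multiset.map_congr rfl fun x _ => ?_
      simp only [Function.comp]
      have := hx x
      linarith
    have e2 : ∑ y, u y + t = ∑ y, g u y := by rw [ht]; ring
    rw [e1, e2] at p2
    have p3 : Finset.univ.val.map (rzh (π' false) (g u)) + {t} + {∑ y, g u y} =
        Finset.univ.val.map (fun b => rzh (π false) u b + t) + {0} + {∑ y, g u y} := by
      rw [add_right_comm, ← p', add_right_comm, p2, add_right_comm]; rfl
    exact add_right_cancel p3

theorem rzConn_trans {π π' π'' : RPair A} (a : rzConn π π') (b : rzConn π' π'') :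
    rzConn π π'' := by
  obtain ⟨g, g1, g2, g3⟩ := a
  obtain ⟨k, k1, k2, k3⟩ := b
  refine ⟨k ∘ₗ g, by rw [LinearMap.det_comp, g1, k1, one_mul], ?_, ?_⟩
  · intro u v; rw [← g2, ← k2]; rfl
  · intro u hu
    obtain ⟨a1, a2⟩ := g3 u hu
    obtain ⟨b1, b2⟩ := k3 _ a1
    exact ⟨b1, rzmrel_trans a2 b2⟩

theorem rzConn_of_EClass {π π' : RPair A} (h : π' ∈ EClass π) : rzConn π π' := by
  have h' : Relation.ReflTransGen (fun x y => RightMove x y ∨ LeftMove x y) π π' := h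
  induction h' with
  | refl => exact ⟨LinearMap.id, LinearMap.det_id, fun _ _ => rfl, fun u hu => ⟨hu, 0, by simp⟩⟩
  | tail h1 h2 ih => exact rzConn_trans (ih h1) (rzConn_of_move h2)

end LeftM


section CycLem

/-- Cycle size. -/
noncomputable def rzcs (Q : Perm A) (b : A) : ℕ := Set.ncard {c | Q.SameCycle b c}

theorem rzcs_one (Q : Perm A) (b : A) : rzcs Q b = 1 ↔ Q b = b := by
  constructor
  · intro h
    rw [rzcs, Set.ncard_eq_one] at h
    obtain ⟨a, ha⟩ := h
    have h1 : b ∈ ({a} : Set A) := by rw [← ha]; exact Equiv.Perm.SameCycle.refl _ _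
    have h2 : Q b ∈ ({a} : Set A) := by
      rw [← ha]; exact Equiv.Perm.sameCycle_apply_right.2 (Equiv.Perm.SameCycle.refl _ _)
    rw [Set.mem_singleton_iff] at h1 h2
    rw [h2, h1]
  · intro h
    rw [rzcs, Set.ncard_eq_one]
    refine ⟨b, ?_⟩
    ext c
    simp only [Set.mem_ofPred_eq, Set.mem_singleton_iff]
    constructor
    · intro hc
      obtain ⟨i, hi⟩ := hc
      rw [← hi]
      exact Equiv.Perm.zpow_apply_eq_self_of_apply_eq_self h i
    · rintro rfl; exact Equiv.Perm.SameCycle.refl _ _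

theorem rzcs_support [DecidableEq A] (Q : Perm A) (b : A) (h : Q b ≠ b) :
    (Q.cycleOf b).support.card = rzcs Q b := by
  rw [rzcs, ← Set.ncard_coe_finset]
  congr 1
  ext c
  simp [Equiv.Perm.mem_support_cycleOf_iff' h]

theorem rzcs_congr {Q : Perm A} {b c : A} (h : Q.SameCycle b c) : rzcs Q b = rzcs Q c := by
  unfold rzcs
  congr 1
  ext d
  exact ⟨fun k => h.symm.trans k, fun k => h.trans k⟩

theorem rz_lam_nodup [DecidableEq A] (Q : Perm A) (X : A) (hX : Q X = X) :
    (lamOf Q).Nodup ↔ ∀ b c, b ≠ X → c ≠ X → rzcs Q b = rzcs Q c → Q.SameCycle b c := by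
  have hdis : Disjoint Q.cycleType
      (Multiset.replicate ((Finset.univ.filter fun a => Q a = a).card - 1) 1) := by
    rw [Multiset.disjoint_left]
    intro a ha hb
    have := Equiv.Perm.two_le_of_mem_cycleType ha
    have := Multiset.eq_of_mem_replicate hb
    omega
  have hfix : (Finset.univ.filter fun a => Q a = a).card - 1 =
      ((Finset.univ.filter fun a => Q a = a).erase X).card := by
    rw [Finset.card_erase_of_mem (by simp [hX])]
  rw [lamOf, Multiset.nodup_add, hfix]
  rw [Equiv.Perm.cycleType_def, Multiset.nodup_map_iff_inj_on (Finset.nodup _)]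
  constructor
  · rintro ⟨h1, h2, -⟩ b c hb hc hbc
    have h2' : ((Finset.univ.filter fun a => Q a = a).erase X).card ≤ 1 := by
      by_contra h
      obtain ⟨k, hk⟩ := Nat.exists_eq_add_of_le (not_le.1 h)
      rw [hk, show Nat.succ 1 + k = k + 1 + 1 by omega, Multiset.replicate_succ,
        Multiset.replicate_succ] at h2
      simp at h2
    by_cases hfb : Q b = b
    · have hfc : Q c = c := by rw [← rzcs_one, ← hbc, rzcs_one]; exact hfb
      have := Finset.card_le_one.1 h2' b (by simp [hb, hfb]) c (by simp [hc, hfc])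
      rw [this]
    · have hfc : Q c ≠ c := by
        intro h; rw [← rzcs_one, ← hbc, rzcs_one] at h; exact hfb h
      have := h1 (Q.cycleOf b) (by
          rw [Finset.mem_val, Equiv.Perm.cycleOf_mem_cycleFactorsFinset_iff]; simpa using hfb)
        (Q.cycleOf c) (by
          rw [Finset.mem_val, Equiv.Perm.cycleOf_mem_cycleFactorsFinset_iff]; simpa using hfc)
        (by simp only [Function.comp]; rw [rzcs_support _ _ hfb, rzcs_support _ _ hfc, hbc])
      rwa [Equiv.Perm.sameCycle_iff_cycleOf_eq_of_mem_support] <;> simpa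
  · intro D
    refine ⟨?_, ?_, ?_⟩
    · intro c1 h1 c2 h2 h12
      rw [Finset.mem_val] at h1 h2
      have hc1 := (Equiv.Perm.mem_cycleFactorsFinset_iff.1 h1)
      have hc2 := (Equiv.Perm.mem_cycleFactorsFinset_iff.1 h2)
      obtain ⟨b, hb⟩ := Finset.card_pos.1
        (lt_of_lt_of_le (by norm_num) (hc1.1.two_le_card_support))
      obtain ⟨c, hc⟩ := Finset.card_pos.1
        (lt_of_lt_of_le (by norm_num) (hc2.1.two_le_card_support))
      have eb := Equiv.Perm.cycle_is_cycleOf hb h1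
      have ec := Equiv.Perm.cycle_is_cycleOf hc h2
      have fb : Q b ≠ b := by
        rw [← hc1.2 b hb]; simpa using hb
      have fc : Q c ≠ c := by
        rw [← hc2.2 c hc]; simpa using hc
      have h12' : c1.support.card = c2.support.card := h12
      rw [eb, ec, rzcs_support _ _ fb, rzcs_support _ _ fc] at h12'
      have := D b c (by rintro rfl; exact fb hX) (by rintro rfl; exact fc hX) h12'
      rw [eb, ec, this.cycleOf_eq]
    · have : ((Finset.univ.filter fun a => Q a = a).erase X).card ≤ 1 := by
        rw [Finset.card_le_one]
        intro b hb c hc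
        simp only [Finset.mem_erase, Finset.mem_filter, Finset.mem_univ, true_and] at hb hc
        have := D b c hb.1 hc.1 (by rw [(rzcs_one Q b).2 hb.2, (rzcs_one Q c).2 hc.2])
        obtain ⟨i, hi⟩ := this
        rw [← hi, Equiv.Perm.zpow_apply_eq_self_of_apply_eq_self hb.2 i]
      interval_cases h : ((Finset.univ.filter fun a => Q a = a).erase X).card <;> simp
    · rw [← hfix]; exact hdis

theorem rz_same_of_rel {S : Perm A} (r : A → A → Prop) (hr : Equivalence r)
    (h : ∀ b, r b (S b)) {b c : A} (hbc : S.SameCycle b c) : r b c := by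
  obtain ⟨i, -, hi⟩ := hbc.exists_pow_eq'
  rw [← hi]
  clear hi
  induction i with
  | zero => exact hr.refl _
  | succ n ih => rw [pow_succ', Equiv.Perm.mul_apply]; exact hr.trans ih (h _)

theorem rz_same_SQ [Nonempty A] {π : RPair A} {S Q : Perm A} (hQ : IsQ π S Q)
    (hSX : S (XOf π) ≠ XOf π) {b c : A} (hb : b ≠ XOf π) (hc : c ≠ XOf π) :
    Q.SameCycle b c ↔ S.SameCycle b c := by
  classical
  constructor
  · intro h
    refine rz_same_of_rel (fun x y => S.SameCycle x y) ⟨fun _ => Equiv.Perm.SameCycle.refl _ _,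
      fun h => h.symm, fun h h' => h.trans h'⟩ ?_ h
    intro x
    by_cases hx : x = XOf π
    · rw [hx, hQ.1]
    · by_cases hx' : S x = XOf π
      · rw [(hQ.2 x hx).1 hx']; simp [Equiv.Perm.SameCycle.refl]
      · rw [(hQ.2 x hx).2 hx']; simp [Equiv.Perm.SameCycle.refl]
  · intro h
    have := rz_same_of_rel (fun x y => Q.SameCycle (if x = XOf π then S (XOf π) else x)
      (if y = XOf π then S (XOf π) else y)) ⟨fun _ => Equiv.Perm.SameCycle.refl _ _,
      fun h => h.symm, fun h h' => h.trans h'⟩ ?_ h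
    · simpa [hb, hc] using this
    · intro x
      by_cases hx : x = XOf π
      · subst hx; simp [hSX, Equiv.Perm.SameCycle.refl]
      · by_cases hx' : S x = XOf π
        · have := (hQ.2 x hx).1 hx'
          simp only [hx, hx', if_true, if_false]
          rw [hx'] at this
          rw [← this]; simp [Equiv.Perm.SameCycle.refl]
        · have := (hQ.2 x hx).2 hx'
          simp only [hx, hx', if_false]
          rw [← this]; simp [Equiv.Perm.SameCycle.refl]

end CycLem

section KLem

theorem rzh_first (e : A ≃ Fin (Fintype.card A)) (u : A → ℝ) (x : A) (hx : (e x : ℕ) = 0) :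
    rzh e u x = 0 := by
  unfold rzh
  refine Finset.sum_eq_zero fun y _ => ?_
  rw [if_neg]; rw [Fin.lt_def]; omega

theorem rzh_succ (e : A ≃ Fin (Fintype.card A)) (u : A → ℝ) (x y : A)
    (h : (e y : ℕ) = e x + 1) : rzh e u y = rzh e u x + u x := by
  classical
  have : u x = ∑ z, if z = x then u z else 0 := by simp
  rw [this, rzh, rzh, ← Finset.sum_add_distrib]
  refine Finset.sum_congr rfl fun z _ => ?_
  by_cases hyx : z = x
  · subst hyx; simp [Fin.lt_def, h]
  · have : (e z : ℕ) ≠ e x := fun h => hyx (e.injective (Fin.ext h))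
    have e2 : e z < e y ↔ e z < e x := by rw [Fin.lt_def, Fin.lt_def]; omega
    rw [if_congr e2 rfl rfl]; simp [hyx]

theorem rzh_unique (e : A ≃ Fin (Fintype.card A)) (u F : A → ℝ)
    (h0 : ∀ x, (e x : ℕ) = 0 → F x = 0)
    (h1 : ∀ x y, (e y : ℕ) = e x + 1 → F y = F x + u x) (x : A) : rzh e u x = F x := by
  obtain ⟨k, hk⟩ : ∃ k, (e x : ℕ) = k := ⟨_, rfl⟩
  induction k generalizing x with
  | zero => rw [h0 x hk, rzh_first e u x hk]
  | succ n ih =>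
    have hlt : n < Fintype.card A := by have := (e x).isLt; omega
    have hy : (e (e.symm ⟨n, hlt⟩) : ℕ) = n := by simp
    have hs : (e x : ℕ) = e (e.symm ⟨n, hlt⟩) + 1 := by rw [hy, hk]
    rw [h1 _ _ hs, rzh_succ e u _ _ hs, ih _ hy]

theorem rz_irr_last [Nonempty A] (hN : 2 ≤ Fintype.card A) {π : RPair A} (hπ : PairIrreducible π) :
    (π false).symm (posLast A) ≠ (π true).symm (posLast A) := by
  intro h
  have := hπ ⟨Fintype.card A - 2, by omega⟩ (by
    intro x hx
    have hx' : (π false x : ℕ) ≤ Fintype.card A - 2 := hx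
    change (π true x : ℕ) ≤ Fintype.card A - 2
    by_contra hc
    have h1 := (π true x).isLt
    have h2 : x = (π true).symm (posLast A) := by
      rw [Equiv.eq_symm_apply]; apply Fin.ext; simp only [posLast]; omega
    rw [← h, Equiv.eq_symm_apply] at h2
    have : (π false x : ℕ) = Fintype.card A - 1 := by rw [h2]; rfl
    omega)
  simp only at this
  omega

theorem rz_irr_first [Nonempty A] (hN : 2 ≤ Fintype.card A) {π : RPair A} (hπ : PairIrreducible π) :
    (π false).symm (posFirst A) ≠ (π true).symm (posFirst A) := by
  intro h
  have := hπ ⟨0, by omega⟩ (by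
    intro x hx
    have hx' : (π false x : ℕ) ≤ 0 := hx
    change (π true x : ℕ) ≤ 0
    have h2 : x = (π false).symm (posFirst A) := by
      rw [Equiv.eq_symm_apply]; apply Fin.ext; simp only [posFirst]; omega
    rw [h, Equiv.eq_symm_apply] at h2
    rw [h2]; exact le_refl 0)
  simp only at this
  omega

theorem rz_SX [Nonempty A] (hN : 2 ≤ Fintype.card A) {π : RPair A} (hπ : PairIrreducible π)
    {S : Perm A} (hS : IsS π S) : S (XOf π) ≠ XOf π := by
  intro h
  have h0 : (π false (XOf π) : ℕ) = 0 := by simp [XOf, posFirst]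
  by_cases hb : π true (XOf π) = posFirst A
  · apply rz_irr_first hN hπ
    rw [Equiv.eq_symm_apply]; exact hb
  · obtain ⟨h1, h2⟩ := (hS (XOf π)).2 hb
    rw [h] at h1 h2
    by_cases hc : ((π true (XOf π) : ℕ) = (π true ((π false).symm (posLast A)) : ℕ) + 1)
    · have := h1 hc; omega
    · have := h2 hc; omega

theorem rz_K1 [Nonempty A] {π : RPair A} {S : Perm A} (hS : IsS π S) {u : A → ℝ} (hu : rzK π u)
    (b : A) : rzh (π false) u (S b) = rzh (π false) u b := by
  have hl0 : ∀ x, π false x ≤ π false ((π false).symm (posLast A)) := by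
    intro x; rw [Equiv.apply_symm_apply]; simp only [Fin.le_def, posLast]
    have := (π false x).isLt; omega
  have hl1 : ∀ x, π true x ≤ π true ((π true).symm (posLast A)) := by
    intro x; rw [Equiv.apply_symm_apply]; simp only [Fin.le_def, posLast]
    have := (π true x).isLt; omega
  by_cases hb : π true b = posFirst A
  · rw [(hS b).1 hb, rzh_first _ _ _ (by simp [posFirst]), ← hu b,
      rzh_first _ _ _ (by rw [hb]; rfl)]
  · obtain ⟨h1, h2⟩ := (hS b).2 hb
    by_cases hc : ((π true b : ℕ) = (π true ((π false).symm (posLast A)) : ℕ) + 1)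
    · rw [rzh_succ _ _ _ _ (h1 hc), ← hu b, rzh_succ _ _ _ _ hc, hu, rzh_add_last _ _ _ hl0,
        ← hu, rzh_add_last _ _ _ hl1]
    · have hpos : (π true b : ℕ) ≠ 0 := fun h => hb (Fin.ext h)
      rw [rzh_succ _ _ _ _ (h2 hc), ← hu b, ← hu]
      rw [← rzh_succ]
      rw [Equiv.apply_symm_apply]; simp only; omega

theorem rz_K2 [Nonempty A] (hN : 2 ≤ Fintype.card A) {π : RPair A} (hπ : PairIrreducible π)
    {S : Perm A} (hS : IsS π S) (f : A → ℝ) (hf : ∀ b, f (S b) = f b) :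
    ∃ u, rzK π u ∧ ∀ b, rzh (π false) u b = f b - f (XOf π) := by
  classical
  set z0 := (π false).symm (posLast A) with hz0
  set z1 := (π true).symm (posLast A) with hz1
  have hz : z0 ≠ z1 := rz_irr_last hN hπ
  -- next letter in the top row
  have hnext : ∀ b, b ≠ z0 → (π false b : ℕ) + 1 < Fintype.card A := by
    intro b hb
    have h1 := (π false b).isLt
    by_contra h
    apply hb
    rw [hz0, Equiv.eq_symm_apply]; apply Fin.ext; simp only [posLast]; omega
  let R : A → ℝ := fun b => if h : b = z0 then
    f ((π false).symm ⟨_, hnext z1 hz.symm⟩) else f ((π false).symm ⟨_, hnext b h⟩)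
  have hR : ∀ b c, (π false c : ℕ) = π false b + 1 → R b = f c := by
    intro b c h
    have hb : b ≠ z0 := by
      rintro rfl
      have := (π false c).isLt
      rw [hz0, Equiv.apply_symm_apply] at h; simp only [posLast] at h; omega
    simp only [R, hb, dif_neg, not_false_eq_true]
    congr 1
    rw [Equiv.symm_apply_eq]; exact Fin.ext h.symm
  have hRz : ∀ c, (π false c : ℕ) = π false z1 + 1 → R z0 = f c := by
    intro c h
    simp only [R, dif_pos]
    congr 1
    rw [Equiv.symm_apply_eq]; exact Fin.ext h.symm
  have hX : ∀ x, (π false x : ℕ) = 0 → x = XOf π := by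
    intro x hx
    rw [XOf, Equiv.eq_symm_apply]; exact Fin.ext hx
  have k0 : ∀ b, rzh (π false) (fun b => R b - f b) b = f b - f (XOf π) := by
    apply rzh_unique
    · intro x hx; rw [hX x hx]; ring
    · intro x y h; rw [hR x y h]; ring
  have k1 : ∀ b, rzh (π true) (fun b => R b - f b) b = f b - f (XOf π) := by
    apply rzh_unique
    · intro x hx
      have := (hS x).1 (Fin.ext hx)
      rw [← hf x, this, XOf]; ring
    · intro x y h
      have hy : π true y ≠ posFirst A := by
        intro h'; rw [h'] at h; simp only [posFirst] at h; omega
      obtain ⟨h1, h2⟩ := (hS y).2 hy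
      have : R x = f y := by
        rw [← hf y]
        by_cases hc : ((π true y : ℕ) = (π true z0 : ℕ) + 1)
        · have hx : x = z0 := (π true).injective (Fin.ext (by omega))
          rw [hx]; exact hRz _ (h1 hc)
        · apply hR
          rw [h2 hc]
          congr 3
          rw [Equiv.symm_apply_eq]; apply Fin.ext; simp only; omega
      rw [this]; ring
  exact ⟨_, fun x => by rw [k0, k1], k0⟩

theorem rz_K3 [Nonempty A] (hN : 2 ≤ Fintype.card A) {π : RPair A} (hπ : PairIrreducible π)
    {u v : A → ℝ} (hu : rzK π u) (hv : rzK π v)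
    (h : ∀ b, rzh (π false) u b = rzh (π false) v b) : u = v := by
  funext b
  have step : ∀ ε, π ε b ≠ posLast A → u b = v b := by
    intro ε hb
    have hlt : (π ε b : ℕ) + 1 < Fintype.card A := by
      have h1 := (π ε b).isLt
      by_contra hc; apply hb; apply Fin.ext; simp only [posLast]; omega
    have hs : (π ε ((π ε).symm ⟨_, hlt⟩) : ℕ) = π ε b + 1 := by simp
    have a1 := rzh_succ _ u _ _ hs
    have a2 := rzh_succ _ v _ _ hs
    have hh : ∀ b, rzh (π ε) u b = rzh (π ε) v b := by
      cases ε
      · exact h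
      · intro b; rw [hu, hv, h]
    rw [hh, hh] at a1
    linarith
  by_cases h0 : π false b = posLast A
  · apply step true
    intro h1
    apply rz_irr_last hN hπ
    rw [(Equiv.symm_apply_eq _).2 h0.symm, (Equiv.symm_apply_eq _).2 h1.symm]
  · exact step false h0

end KLem


section FirstDir

theorem rz_det_perm [DecidableEq A] (ν : Perm A) :
    LinearMap.det (LinearMap.funLeft ℝ ℝ (ν.symm : A → A)) = ((Equiv.Perm.sign ν : ℤ) : ℝ) := by
  rw [← LinearMap.det_toMatrix']
  have : LinearMap.toMatrix' (LinearMap.funLeft ℝ ℝ (ν.symm : A → A))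
      = Equiv.Perm.permMatrix ℝ (ν⁻¹) := by
    ext i j
    rw [LinearMap.toMatrix'_apply]
    simp [LinearMap.funLeft_apply, Equiv.Perm.permMatrix, PEquiv.toMatrix_apply, Pi.single_apply,
      Equiv.Perm.inv_def, eq_comm]
  rw [this, Matrix.det_permutation, Equiv.Perm.sign_inv]

theorem rzh_rename (e : A ≃ Fin (Fintype.card A)) (ν : Perm A) (w : A → ℝ) (x : A) :
    rzh (ν.trans e) w x = rzh e (fun y => w (ν.symm y)) (ν x) := by
  unfold rzh
  rw [← Equiv.sum_comp ν (fun y => if e y < e (ν x) then w (ν.symm y) else 0)]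
  refine Finset.sum_congr rfl fun y _ => ?_
  rw [Equiv.symm_apply_apply]; rfl

theorem rz_fixed [Nonempty A] (hN : 2 ≤ Fintype.card A) {π : RPair A} (hπ : PairIrreducible π)
    {S Q : Perm A} (hS : IsS π S) (hQ : IsQ π S Q)
    (D : ∀ b c, b ≠ XOf π → c ≠ XOf π → rzcs Q b = rzcs Q c → Q.SameCycle b c)
    {u v : A → ℝ} (hu : rzK π u) (hv : rzK π v)
    (hsep : ∀ b c, rzh (π false) u b = rzh (π false) u c → S.SameCycle b c)
    (hm : rzmrel (rzh (π false) u) (rzh (π false) v)) : v = u := by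
  classical
  obtain ⟨t, ht⟩ := hm
  have hSX := rz_SX hN hπ hS
  set X := XOf π with hXdef
  have hX0 : ∀ w, rzh (π false) w X = 0 := fun w =>
    rzh_first _ _ _ (by simp [hXdef, XOf, posFirst])
  set B : Finset A := Finset.univ.erase X with hB
  have hBm : ∀ b, b ∈ B ↔ b ≠ X := by intro b; simp [hB]
  set F : A → ℝ := fun b => rzh (π false) u b + t with hF
  set F' : A → ℝ := rzh (π false) v with hF'
  have hmap : ∀ G : A → ℝ, Finset.univ.val.map G = G X ::ₘ B.val.map G := by
    intro G
    rw [← Finset.insert_erase (Finset.mem_univ X), Finset.insert_val_of_notMem (by simp),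
      Multiset.map_cons]
  have hM : B.val.map F' = B.val.map F := by
    rw [hmap, hmap F] at ht
    have e1 : F' X = 0 := hX0 v
    have e2 : F X = t := by simp only [hF, hX0, zero_add]
    rw [e1, e2] at ht
    have : B.val.map F' + ({0} + {t}) = B.val.map F + ({0} + {t}) := by
      rw [← Multiset.singleton_add, ← Multiset.singleton_add] at ht
      rw [← add_assoc, add_comm (B.val.map F'), ht]
      ac_rfl
    exact add_right_cancel this
  have hcount : ∀ r : ℝ, (B.filter fun b => F' b = r).card = (B.filter fun b => F b = r).card := by
    intro r
    have := congrArg (Multiset.count r) hM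
    rw [Multiset.count_map, Multiset.count_map] at this
    simp only [Finset.card, Finset.filter_val]
    simpa [eq_comm] using this
  have himg : B.image F' = B.image F := by
    ext r
    have h1 : r ∈ B.val.map F' ↔ r ∈ B.val.map F := by rw [hM]
    simpa [Multiset.mem_map] using h1
  have hconst : ∀ b c, S.SameCycle b c → F' b = F' c := by
    intro b c h
    exact rz_same_of_rel (fun x y => F' x = F' y) ⟨fun _ => rfl, fun h => h.symm,
      fun h h' => h.trans h'⟩ (fun x => (rz_K1 hS hv x).symm) h
  have hconst0 : ∀ b c, S.SameCycle b c → F b = F c := by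
    intro b c h
    exact rz_same_of_rel (fun x y => F x = F y) ⟨fun _ => rfl, fun h => h.symm,
      fun h h' => h.trans h'⟩ (fun x => by simp only [hF]; rw [rz_K1 hS hu x]) h
  have hsepF : ∀ b c, F b = F c → S.SameCycle b c := by
    intro b c h
    exact hsep b c (by simp only [hF] at h; linarith)
  have hinj : ∀ b ∈ B, ∀ c ∈ B, F' b = F' c → F b = F c := by
    have hex : ∀ r ∈ B.image F, ∃ b ∈ B, F b = r := fun r hr => by simpa using hr
    choose! p hp1 hp2 using hex
    have hphi : ∀ b ∈ B, F' (p (F b)) = F' b := by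
      intro b hb
      exact hconst _ _ (hsepF _ _ (hp2 _ (Finset.mem_image_of_mem _ hb)))
    have := Finset.injOn_of_surjOn_of_card_le (s := B.image F) (t := B.image F)
      (fun r => F' (p r)) (by
        intro r hr
        have := Finset.mem_image_of_mem F' (hp1 r hr)
        rw [himg] at this
        exact this) (by
        intro r hr
        have hr' : r ∈ B.image F' := by rw [himg]; exact hr
        obtain ⟨b, hb, rfl⟩ := Finset.mem_image.1 hr'
        exact ⟨F b, Finset.mem_coe.2 (Finset.mem_image_of_mem _ hb), hphi b hb⟩) le_rfl
    intro b hb c hc h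
    apply this (Finset.mem_coe.2 (Finset.mem_image_of_mem _ hb))
      (Finset.mem_coe.2 (Finset.mem_image_of_mem _ hc))
    simp only
    rw [hphi b hb, hphi c hc, h]
  have hQX : Q X = X := hQ.1
  have hcls : ∀ b ∈ B, ∀ d, (d ∈ B ∧ F d = F b) ↔ Q.SameCycle b d := by
    intro b hb d
    constructor
    · rintro ⟨h1, h2⟩
      exact (rz_same_SQ hQ hSX ((hBm _).1 hb) ((hBm _).1 h1)).2 (hsepF _ _ h2.symm)
    · intro h
      have hd : d ≠ X := by
        rintro rfl
        obtain ⟨i, hi⟩ := h.symm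
        rw [Equiv.Perm.zpow_apply_eq_self_of_apply_eq_self hQX] at hi
        exact (hBm _).1 hb hi.symm
      exact ⟨(hBm _).2 hd, (hconst0 _ _ ((rz_same_SQ hQ hSX ((hBm _).1 hb) hd).1 h)).symm⟩
  have hcard : ∀ b ∈ B, (B.filter fun d => F d = F b).card = rzcs Q b := by
    intro b hb
    rw [rzcs, ← Set.ncard_coe_finset]
    congr 1
    ext d
    simp only [Finset.coe_filter, Set.mem_ofPred_eq]
    exact hcls b hb d
  have hFF : ∀ b ∈ B, F' b = F b := by
    intro b hb
    have hv : F' b ∈ B.image F := by rw [← himg]; exact Finset.mem_image_of_mem _ hb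
    obtain ⟨c, hc, hcv⟩ := Finset.mem_image.1 hv
    have e1 : (B.filter fun d => F' d = F' b) = (B.filter fun d => F d = F b) := by
      refine Finset.filter_congr fun d hd => ⟨fun h => hinj d hd b hb h, fun h => ?_⟩
      exact hconst _ _ (hsepF _ _ h)
    have e2 := hcount (F' b)
    rw [e1, hcard b hb, ← hcv, hcard c hc] at e2
    have := D b c ((hBm _).1 hb) ((hBm _).1 hc) e2
    rw [← hcv]
    exact (hconst0 _ _ ((rz_same_SQ hQ hSX ((hBm _).1 hb) ((hBm _).1 hc)).1 this)).symm
  have ht0 : t = 0 := by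
    have h1 := hFF (S X) ((hBm _).2 hSX)
    have h2 : F' (S X) = 0 := by rw [hF', rz_K1 hS hv, hX0]
    have h3 : F (S X) = t := by simp only [hF]; rw [rz_K1 hS hu, hX0, zero_add]
    rw [h2, h3] at h1; exact h1.symm
  apply rz_K3 hN hπ hv hu
  intro b
  by_cases hb : b = X
  · rw [hb, hX0, hX0]
  · have := hFF b ((hBm _).2 hb)
    simp only [hF, ht0, add_zero] at this
    exact this

theorem rz_dir1 [DecidableEq A] [Nonempty A] (hN : 2 ≤ Fintype.card A) {π : RPair A}
    (hπ : PairIrreducible π) {S Q : Perm A} (hS : IsS π S) (hQ : IsQ π S Q)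
    (D : ∀ b c, b ≠ XOf π → c ≠ XOf π → rzcs Q b = rzcs Q c → Q.SameCycle b c)
    (ν : Perm A) (hν : ν ∈ renamings π) : Equiv.Perm.sign ν = 1 := by
  obtain ⟨g, g1, g2, g3⟩ := rzConn_of_EClass hν
  set R : (A → ℝ) →ₗ[ℝ] (A → ℝ) := (LinearMap.funLeft ℝ ℝ (ν.symm : A → A)) ∘ₗ g with hRdef
  have hR : ∀ u, R u = fun y => g u (ν.symm y) := fun u => rfl
  have hh : ∀ ε u x, rzh (pairRename π ν ε) (g u) x = rzh (π ε) (R u) (ν x) := by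
    intro ε u x
    rw [hR]; exact rzh_rename _ _ _ _
  have hform : ∀ u v, rzform π (R u) (R v) = rzform π u v := by
    intro u v
    rw [← g2 u v, rzform_apply, rzform_apply, ← Equiv.sum_comp ν]
    refine Finset.sum_congr rfl fun x _ => ?_
    rw [hh, hh, hR v]; simp only [Equiv.symm_apply_apply]
  have hK : ∀ u, rzK π u → rzK π (R u) ∧ rzmrel (rzh (π false) u) (rzh (π false) (R u)) := by
    intro u hu
    obtain ⟨a1, t, a2⟩ := g3 u hu
    refine ⟨?_, t, ?_⟩
    · intro x
      have := a1 (ν.symm x)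
      rw [hh, hh, Equiv.apply_symm_apply] at this
      exact this
    · rw [← a2]
      congr 1
      have : (rzh (pairRename π ν false) (g u)) = (rzh (π false) (R u)) ∘ ν := funext (hh false u)
      rw [this, ← Multiset.map_map]
      congr 1
      have h := congrArg Finset.val (Finset.map_univ_equiv ν)
      rw [Finset.map_val] at h
      exact h.symm
  have hdet : LinearMap.det R = ((Equiv.Perm.sign ν : ℤ) : ℝ) := by
    rw [hRdef, LinearMap.det_comp, g1, mul_one, rz_det_perm]
  -- the separating element
  obtain ⟨f, hf⟩ : ∃ f : A → ℝ, ∀ b c, f b = f c ↔ S.SameCycle b c := by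
    classical
    refine ⟨fun b => ((Fintype.equivFin (Quotient (Equiv.Perm.SameCycle.setoid S))
      (Quotient.mk _ b) : ℕ) : ℝ), fun b c => ?_⟩
    rw [Nat.cast_inj, ← Fin.ext_iff, EmbeddingLike.apply_eq_iff_eq, Quotient.eq]
    rfl
  obtain ⟨u0, hu0, hu0f⟩ := rz_K2 hN hπ hS f (fun b => (hf _ _).2 (by simp [Equiv.Perm.SameCycle.refl]))
  have hsep0 : ∀ b c, rzh (π false) u0 b = rzh (π false) u0 c → S.SameCycle b c := by
    intro b c h
    rw [hu0f, hu0f] at h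
    exact (hf b c).1 (by linarith)
  have hRfix : ∀ u, rzK π u → R u = u := by
    intro u hu
    have hu00 := rz_fixed hN hπ hS hQ D hu0 (hK u0 hu0).1 hsep0 (hK u0 hu0).2
    let bad : Finset ℝ := insert 0 (Finset.univ.image fun p : A × A =>
      -(rzh (π false) u0 p.1 - rzh (π false) u0 p.2) / (rzh (π false) u p.1 - rzh (π false) u p.2))
    obtain ⟨s, hs⟩ := Infinite.exists_notMem_finset bad
    have hs0 : s ≠ 0 := by rintro rfl; simp [bad] at hs
    have hadd : ∀ ε, rzh (π ε) (u0 + s • u) = rzh (π ε) u0 + s • rzh (π ε) u := by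
      intro ε; rw [rzh_add, rzh_smul]
    have hk : rzK π (u0 + s • u) := by
      intro x; rw [hadd, hadd]; simp [hu0 x, hu x]
    have hsep1 : ∀ b c, rzh (π false) (u0 + s • u) b = rzh (π false) (u0 + s • u) c →
        S.SameCycle b c := by
      intro b c h
      rw [hadd] at h
      simp only [Pi.add_apply, Pi.smul_apply, smul_eq_mul] at h
      apply hsep0
      by_cases hd : rzh (π false) u b - rzh (π false) u c = 0
      · have : rzh (π false) u b = rzh (π false) u c := by linarith
        rw [this] at h; linarith
      · exfalso
        apply hs
        simp only [bad, Finset.mem_insert, Finset.mem_image, Finset.mem_univ, true_and]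
        right
        refine ⟨(b, c), ?_⟩
        rw [div_eq_iff hd]; simp only; linarith
    have hfix := rz_fixed hN hπ hS hQ D hk (hK _ hk).1 hsep1 (hK _ hk).2
    rw [map_add, map_smul, hu00] at hfix
    have := add_left_cancel hfix
    exact smul_right_injective _ hs0 this
  have := rz_det_form (rzform π) (rzform_skew π) R hform
    (fun x hx => hRfix x ((rzK_iff π x).2 hx))
  rw [hdet] at this
  have h2 : (Equiv.Perm.sign ν : ℤ) = 1 := by exact_mod_cast this
  exact Units.ext h2

end FirstDir


section Lists

/-- The row as a list. -/
def rzl (e : A ≃ Fin (Fintype.card A)) : List A := List.ofFn e.symm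

theorem rzl_nodup (e : A ≃ Fin (Fintype.card A)) : (rzl e).Nodup :=
  List.nodup_ofFn_ofInjective e.symm.injective

theorem rzl_mem (e : A ≃ Fin (Fintype.card A)) (x : A) : x ∈ rzl e := by
  rw [rzl, List.mem_ofFn]; exact ⟨e x, by simp⟩

theorem rzl_length (e : A ≃ Fin (Fintype.card A)) : (rzl e).length = Fintype.card A := by
  simp [rzl]

theorem rzl_idx [DecidableEq A] (e : A ≃ Fin (Fintype.card A)) (x : A) :
    (rzl e).idxOf x = e x := by
  have h : (e x : ℕ) < (rzl e).length := by rw [rzl_length]; exact (e x).isLt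
  have h2 : (rzl e)[(e x : ℕ)] = x := by simp [rzl]
  have := (rzl_nodup e).idxOf_getElem (e x) h
  rwa [h2] at this

theorem rzl_inj {e e' : A ≃ Fin (Fintype.card A)} (h : rzl e = rzl e') : e = e' := by
  classical
  ext x
  rw [← rzl_idx, ← rzl_idx, h]

theorem rzl_exists (l : List A) (h1 : l.Nodup) (h2 : ∀ x, x ∈ l) :
    ∃ e : A ≃ Fin (Fintype.card A), rzl e = l := by
  classical
  have hl : l.length = Fintype.card A := by
    rw [← List.toFinset_card_of_nodup h1, ← Finset.card_univ]
    congr 1; ext x; simp [h2 x]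
  refine ⟨(h1.getEquivOfForallMemList l h2).symm.trans (finCongr hl), ?_⟩
  apply List.ext_getElem
  · rw [rzl_length, hl]
  · intro i h h'
    simp [rzl]

theorem rzl_rename (e : A ≃ Fin (Fintype.card A)) (ν : Perm A) :
    rzl (ν.trans e) = (rzl e).map ν.symm := by
  simp [rzl, List.map_ofFn]

theorem rzl_rev (e : A ≃ Fin (Fintype.card A)) :
    rzl (e.trans Fin.revPerm) = (rzl e).reverse := by
  apply List.ext_getElem
  · simp [rzl_length]
  · intro i h h'
    simp only [rzl, List.getElem_ofFn, List.getElem_reverse, List.length_ofFn]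
    rw [rzl_length] at h
    rw [Equiv.symm_apply_eq]
    apply Fin.ext
    simp only [Equiv.trans_apply, Equiv.apply_symm_apply, Fin.revPerm_apply, Fin.val_rev]
    omega

theorem rzmv1 {π π' : RPair A} (ε : Bool) {T U V : List A} {z y : A}
    (h0 : rzl (π ε) = T ++ [z]) (h1 : rzl (π (!ε)) = U ++ z :: (V ++ [y]))
    (h0' : π' ε = π ε) (h1' : rzl (π' (!ε)) = U ++ z :: y :: V) : RightMove π π' := by
  classical
  have n0 := rzl_nodup (π ε)
  have n1 := rzl_nodup (π (!ε))
  have m0 := rzl_mem (π ε)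
  have m1 := rzl_mem (π (!ε))
  rw [h0] at n0 m0
  rw [h1] at n1 m1
  have i0 : ∀ x, (π ε x : ℕ) = (T ++ [z]).idxOf x := fun x => by rw [← h0, rzl_idx]
  have i1 : ∀ x, (π (!ε) x : ℕ) = (U ++ z :: (V ++ [y])).idxOf x := fun x => by
    rw [← h1, rzl_idx]
  have i1' : ∀ x, (π' (!ε) x : ℕ) = (U ++ z :: y :: V).idxOf x := fun x => by
    rw [← h1', rzl_idx]
  simp only [List.nodup_append, List.nodup_cons, List.mem_cons, List.mem_append] at n0 n1
  have cz : (π (!ε) z : ℕ) = U.length := by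
    rw [i1, List.idxOf_append_of_notMem]
    · simp
    · intro hz; exact n1.2.2 z hz z (Or.inl rfl) rfl
  have hyU : y ∉ U := fun hz => n1.2.2 y hz y (by simp) rfl
  have hyz : z ≠ y := by
    rintro rfl; apply n1.2.1.1; simp
  have hyV : y ∉ V := fun hz => n1.2.1.2.2.2 y hz y (by simp) rfl
  have cy : (π (!ε) y : ℕ) = U.length + 1 + V.length := by
    rw [i1, List.idxOf_append_of_notMem hyU, List.idxOf_cons_ne _ hyz,
      List.idxOf_append_of_notMem hyV]; simp; omega
  have cy' : (π' (!ε) y : ℕ) = U.length + 1 := by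
    rw [i1', List.idxOf_append_of_notMem hyU, List.idxOf_cons_ne _ hyz]; simp
  have hc : ∀ b, b = y ∨ (π (!ε) b ≤ π (!ε) z ∧ π' (!ε) b = π (!ε) b) ∨
      (¬ π (!ε) b ≤ π (!ε) z ∧ (π' (!ε) b : ℕ) = π (!ε) b + 1 ∧ (π (!ε) b : ℕ) ≤ U.length + V.length) := by
    intro b
    by_cases hby : b = y
    · left; exact hby
    right
    by_cases hbU : b ∈ U
    · left
      have h1 : (π (!ε) b : ℕ) = U.idxOf b := by rw [i1, List.idxOf_append_of_mem hbU]
      have h2 : (π' (!ε) b : ℕ) = U.idxOf b := by rw [i1', List.idxOf_append_of_mem hbU]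
      have := List.idxOf_lt_length_of_mem hbU
      refine ⟨?_, Fin.ext (by rw [h1, h2])⟩
      rw [Fin.le_def]; omega
    · by_cases hbz : b = z
      · left
        subst hbz
        refine ⟨le_rfl, Fin.ext ?_⟩
        rw [cz, i1', List.idxOf_append_of_notMem hbU]; simp
      · right
        have hbV : b ∈ V := by
          have := m1 b
          simp only [List.mem_append, List.mem_cons, List.not_mem_nil, or_false] at this
          tauto
        have hlt := List.idxOf_lt_length_of_mem hbV
        have e1 : (π (!ε) b : ℕ) = U.length + (V.idxOf b + 1) := by
          rw [i1, List.idxOf_append_of_notMem hbU, List.idxOf_cons_ne _ (Ne.symm hbz),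
            List.idxOf_append_of_mem hbV]
        have e2 : (π' (!ε) b : ℕ) = U.length + (V.idxOf b + 2) := by
          rw [i1', List.idxOf_append_of_notMem hbU, List.idxOf_cons_ne _ (Ne.symm hbz),
            List.idxOf_cons_ne _ (Ne.symm hby)]
        refine ⟨?_, by omega, by omega⟩
        rw [Fin.le_def]; omega
  refine ⟨ε, z, y, ?_, ?_, h0', ?_, ?_, ?_⟩
  · intro x
    rw [Fin.le_def, i0, i0, List.idxOf_append_of_notMem (l₁ := T) (a := z)]
    · have := List.idxOf_lt_length_of_mem (m0 x)
      simp at this ⊢; omega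
    · intro hz; exact n0.2.2 z hz z (by simp) rfl
  · intro x
    rw [Fin.le_def]
    rcases hc x with rfl | h | h
    · omega
    · have := h.1; rw [Fin.le_def] at this; omega
    · omega
  · intro b hb
    rcases hc b with rfl | h | h
    · rw [Fin.le_def] at hb; omega
    · exact h.2
    · exact absurd hb h.1
  · omega
  · intro b hb hby
    rcases hc b with rfl | h | h
    · exact absurd rfl hby
    · exact absurd h.1 hb
    · exact h.2.1

/-- Mutual reachability with right moves. -/
def rzRR (π ρ : RPair A) : Prop :=
  Relation.ReflTransGen RightMove π ρ ∧ Relation.ReflTransGen RightMove ρ π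

theorem rzRR.trans {π ρ σ : RPair A} (h : rzRR π ρ) (h' : rzRR ρ σ) : rzRR π σ :=
  ⟨h.1.trans h'.1, h'.2.trans h.2⟩

/-- Replace one row. -/
def rzset (π : RPair A) (ε : Bool) (e : A ≃ Fin (Fintype.card A)) : RPair A :=
  fun δ => if δ = ε then e else π δ

theorem rz_perm_of_rot {V V' : List A} (h : V' ~r V) {U : List A} {z : A} :
    (U ++ z :: V').Perm (U ++ z :: V) := by
  exact List.Perm.append_left _ (List.Perm.cons _ h.perm)

theorem rzmv_one {π : RPair A} (ε : Bool) {T U V : List A} {z : A}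
    (h0 : rzl (π ε) = T ++ [z]) (n : ℕ) :
    ∀ {π' : RPair A}, rzl (π (!ε)) = U ++ z :: V.rotate n →
    π' ε = π ε → rzl (π' (!ε)) = U ++ z :: V → Relation.ReflTransGen RightMove π π' := by
  induction n generalizing π with
  | zero =>
    intro π' h1 h0' h1'
    have : π' = π := by
      funext δ
      rcases Bool.eq_or_eq_not δ ε with rfl | rfl
      · exact h0'
      · apply rzl_inj; rw [h1', h1, List.rotate_zero]
    rw [this]
  | succ n ih =>
    intro π' h1 h0' h1'
    have hp : (U ++ z :: V.rotate n).Perm (rzl (π (!ε))) := by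
      rw [h1]; apply rz_perm_of_rot
      exact (List.IsRotated.forall V n).trans (List.IsRotated.forall V (n+1)).symm
    obtain ⟨e, he⟩ := rzl_exists (U ++ z :: V.rotate n) (hp.nodup_iff.2 (rzl_nodup _))
      (fun x => hp.mem_iff.2 (rzl_mem _ x))
    have s1 : rzset π (!ε) e ε = π ε := by simp [rzset]
    have s2 : rzset π (!ε) e (!ε) = e := by simp [rzset]
    have step : Relation.ReflTransGen RightMove π (rzset π (!ε) e) := by
      rcases hV : V.rotate n with _ | ⟨y, V1⟩
      · have : V = [] := by simpa using hV
        subst this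
        have : rzset π (!ε) e = π := by
          funext δ
          rcases Bool.eq_or_eq_not δ ε with rfl | rfl
          · exact s1
          · rw [s2]; apply rzl_inj; rw [he, h1]; simp
        rw [this]
      · apply Relation.ReflTransGen.single
        refine rzmv1 ε (U := U) (V := V1) (y := y) h0 ?_ s1 ?_
        · rw [h1, ← List.rotate_rotate, hV]; simp
        · rw [s2, he, hV]
    refine step.trans (ih (by rw [s1, h0]) (by rw [s2, he]) (by rw [h0', s1]) h1')

theorem rzmv {π : RPair A} (ε : Bool) {T U V V' : List A} {z : A}
    (h0 : rzl (π ε) = T ++ [z]) (h1 : rzl (π (!ε)) = U ++ z :: V) (hV : V ~r V') :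
    ∃ π' : RPair A, π' ε = π ε ∧ rzl (π' (!ε)) = U ++ z :: V' ∧ rzRR π π' := by
  have hp : (U ++ z :: V').Perm (rzl (π (!ε))) := by
    rw [h1]; exact rz_perm_of_rot hV.symm
  obtain ⟨e, he⟩ := rzl_exists (U ++ z :: V') (hp.nodup_iff.2 (rzl_nodup _))
    (fun x => hp.mem_iff.2 (rzl_mem _ x))
  have s1 : rzset π (!ε) e ε = π ε := by simp [rzset]
  have s2 : rzset π (!ε) e (!ε) = e := by simp [rzset]
  refine ⟨rzset π (!ε) e, s1, by rw [s2, he], ?_, ?_⟩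
  · obtain ⟨n, hn⟩ := hV.symm
    exact rzmv_one ε h0 n (V := V') (by rw [h1, hn]) s1 (by rw [s2, he])
  · obtain ⟨n, hn⟩ := hV
    exact rzmv_one ε (by rw [s1, h0]) n (V := V) (by rw [s2, he, hn]) s1.symm h1

/-- Mutual reachability with all moves. -/
def rzReach (π ρ : RPair A) : Prop := ρ ∈ EClass π ∧ π ∈ EClass ρ

theorem rzReach.refl (π : RPair A) : rzReach π π :=
  ⟨Relation.ReflTransGen.refl, Relation.ReflTransGen.refl⟩

theorem rzReach.symm {π ρ : RPair A} (h : rzReach π ρ) : rzReach ρ π := ⟨h.2, h.1⟩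

theorem rzReach.trans {π ρ σ : RPair A} (h : rzReach π ρ) (h' : rzReach ρ σ) : rzReach π σ :=
  ⟨Relation.ReflTransGen.trans h.1 h'.1, Relation.ReflTransGen.trans h'.2 h.2⟩

theorem rzRR.reach {π ρ : RPair A} (h : rzRR π ρ) : rzReach π ρ :=
  ⟨Relation.ReflTransGen.mono (fun _ _ k => Or.inl k) _ _ h.1,
    Relation.ReflTransGen.mono (fun _ _ k => Or.inl k) _ _ h.2⟩

theorem rz_rev_left {π π' : RPair A} (h : RightMove (rzrev π) (rzrev π')) : LeftMove π π' := by
  obtain ⟨ε, w, l, hw, hl, h0, h1, h2, h3⟩ := h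
  have hw' : ∀ x, π ε w ≤ π ε x := fun x => by simpa [rzrev] using hw x
  have hl' : ∀ x, π (!ε) l ≤ π (!ε) x := fun x => by simpa [rzrev] using hl x
  have lt' : ∀ x, (π' (!ε) x : ℕ) < Fintype.card A := fun x => (π' (!ε) x).isLt
  have lt : ∀ x, (π (!ε) x : ℕ) < Fintype.card A := fun x => (π (!ε) x).isLt
  refine ⟨ε, w, l, hw', hl', ?_, ?_, ?_, ?_⟩
  · ext x
    have := congrArg (fun e => (e x : Fin _)) h0
    simp [rzrev] at this
    rw [this]
  · intro b hb
    have := h1 b (by simpa [rzrev] using hb)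
    simpa [rzrev] using this
  · rw [rzrev_val, rzrev_val] at h2
    have := lt' l; have := lt w; omega
  · intro b hb hbl
    have := h3 b (by simpa [rzrev] using hb) hbl
    rw [rzrev_val, rzrev_val] at this
    have := lt' b; have := lt b; omega

theorem rzrev_rev (π : RPair A) : rzrev (rzrev π) = π := by
  funext ε; ext x; simp [rzrev]

theorem rz_rev_path {π π' : RPair A} (h : Relation.ReflTransGen RightMove π π') :
    rzrev π' ∈ EClass (rzrev π) := by
  induction h with
  | refl => exact Relation.ReflTransGen.refl
  | tail h1 h2 ih =>
    refine Relation.ReflTransGen.tail ih (Or.inr (rz_rev_left ?_))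
    rw [rzrev_rev, rzrev_rev]; exact h2

theorem rzmv_left {π : RPair A} (ε : Bool) {T U V V' : List A} {z : A}
    (h0 : rzl (π ε) = z :: T) (h1 : rzl (π (!ε)) = V ++ z :: U) (hV : V ~r V') :
    ∃ π' : RPair A, π' ε = π ε ∧ rzl (π' (!ε)) = V' ++ z :: U ∧ rzReach π π' := by
  have a0 : rzl (rzrev π ε) = T.reverse ++ [z] := by
    rw [rzrev, rzl_rev, h0]; simp
  have a1 : rzl (rzrev π (!ε)) = U.reverse ++ z :: V.reverse := by
    rw [rzrev, rzl_rev, h1]; simp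
  obtain ⟨ρ, b0, b1, b2⟩ := rzmv ε a0 a1 hV.reverse
  refine ⟨rzrev ρ, ?_, ?_, ?_⟩
  · have : rzrev ρ ε = rzrev (rzrev π) ε := by simp only [rzrev] at b0 ⊢; rw [b0]
    rw [this, rzrev_rev]
  · rw [rzrev, rzl_rev, b1]; simp
  · have h1 := rz_rev_path b2.1
    have h2 := rz_rev_path b2.2
    rw [rzrev_rev] at h1 h2
    exact ⟨h1, h2⟩

/-- List-level reachability. -/
def rzLR (t b t' b' : List A) : Prop :=
  ∀ π : RPair A, rzl (π false) = t → rzl (π true) = b →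
    ∃ π' : RPair A, rzl (π' false) = t' ∧ rzl (π' true) = b' ∧ rzReach π π'

theorem rzLR.trans {t b t' b' t'' b'' : List A} (h : rzLR t b t' b') (h' : rzLR t' b' t'' b'') :
    rzLR t b t'' b'' := by
  intro π h0 h1
  obtain ⟨π', a0, a1, a2⟩ := h π h0 h1
  obtain ⟨π'', b0, b1, b2⟩ := h' π' a0 a1
  exact ⟨π'', b0, b1, a2.trans b2⟩

theorem rzLR_r0 {T U V V' : List A} {z : A} (hV : V ~r V') :
    rzLR (T ++ [z]) (U ++ z :: V) (T ++ [z]) (U ++ z :: V') := by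
  intro π h0 h1
  obtain ⟨π', a0, a1, a2⟩ := rzmv false h0 h1 hV
  exact ⟨π', by rw [a0, h0], a1, a2.reach⟩

theorem rzLR_r1 {T U V V' : List A} {z : A} (hV : V ~r V') :
    rzLR (U ++ z :: V) (T ++ [z]) (U ++ z :: V') (T ++ [z]) := by
  intro π h0 h1
  obtain ⟨π', a0, a1, a2⟩ := rzmv true h1 h0 hV
  exact ⟨π', a1, by rw [a0, h1], a2.reach⟩

theorem rzLR_l0 {T U V V' : List A} {z : A} (hV : V ~r V') :
    rzLR (z :: T) (V ++ z :: U) (z :: T) (V' ++ z :: U) := by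
  intro π h0 h1
  obtain ⟨π', a0, a1, a2⟩ := rzmv_left false h0 h1 hV
  exact ⟨π', by rw [a0, h0], a1, a2⟩

theorem rzLR_l1 {T U V V' : List A} {z : A} (hV : V ~r V') :
    rzLR (V ++ z :: U) (z :: T) (V' ++ z :: U) (z :: T) := by
  intro π h0 h1
  obtain ⟨π', a0, a1, a2⟩ := rzmv_left true h1 h0 hV
  exact ⟨π', a1, by rw [a0, h1], a2⟩

end Lists


section Diagrams

theorem rzRight_rename {π π' : RPair A} (ν : Perm A) (h : RightMove π π') :
    RightMove (pairRename π ν) (pairRename π' ν) := by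
  obtain ⟨ε, w, l, hw, hl, h0, h1, h2, h3⟩ := h
  refine ⟨ε, ν.symm w, ν.symm l, ?_, ?_, ?_, ?_, ?_, ?_⟩
  · intro x; simpa [pairRename] using hw (ν x)
  · intro x; simpa [pairRename] using hl (ν x)
  · simp only [pairRename, h0]
  · intro b hb; simpa [pairRename] using h1 (ν b) (by simpa [pairRename] using hb)
  · simpa [pairRename] using h2
  · intro b hb hbl
    simpa [pairRename] using h3 (ν b) (by simpa [pairRename] using hb)
      (fun h => hbl (by rw [← h]; simp))

theorem rzLeft_rename {π π' : RPair A} (ν : Perm A) (h : LeftMove π π') :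
    LeftMove (pairRename π ν) (pairRename π' ν) := by
  obtain ⟨ε, w, l, hw, hl, h0, h1, h2, h3⟩ := h
  refine ⟨ε, ν.symm w, ν.symm l, ?_, ?_, ?_, ?_, ?_, ?_⟩
  · intro x; simpa [pairRename] using hw (ν x)
  · intro x; simpa [pairRename] using hl (ν x)
  · simp only [pairRename, h0]
  · intro b hb; simpa [pairRename] using h1 (ν b) (by simpa [pairRename] using hb)
  · simpa [pairRename] using h2
  · intro b hb hbl
    simpa [pairRename] using h3 (ν b) (by simpa [pairRename] using hb)
      (fun h => hbl (by rw [← h]; simp))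

theorem rzE_rename {π π' : RPair A} (ν : Perm A) (h : π' ∈ EClass π) :
    pairRename π' ν ∈ EClass (pairRename π ν) := by
  have h' : Relation.ReflTransGen (fun x y => RightMove x y ∨ LeftMove x y) π π' := h
  induction h' with
  | refl => exact Relation.ReflTransGen.refl
  | tail h1 h2 ih =>
    refine Relation.ReflTransGen.tail (ih h1) ?_
    rcases h2 with h2 | h2
    · exact Or.inl (rzRight_rename ν h2)
    · exact Or.inr (rzLeft_rename ν h2)

theorem rzReach.rename {π π' : RPair A} (ν : Perm A) (h : rzReach π π') :
    rzReach (pairRename π ν) (pairRename π' ν) := ⟨rzE_rename ν h.1, rzE_rename ν h.2⟩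

theorem rzRename_mul (π : RPair A) (ν τ : Perm A) :
    pairRename (pairRename π ν) τ = pairRename π (ν * τ) := rfl

theorem rzRename_one (π : RPair A) : pairRename π 1 = π := rfl

variable [DecidableEq A]

/-- Signed equivalence. -/
def rzJ (e : ℤˣ) (σ σ' : RPair A) : Prop :=
  ∃ τ : Perm A, Equiv.Perm.sign τ = e ∧ rzReach σ (pairRename σ' τ)

theorem rzJ.trans {e e' : ℤˣ} {σ σ' σ'' : RPair A} (h : rzJ e σ σ') (h' : rzJ e' σ' σ'') :
    rzJ (e * e') σ σ'' := by
  obtain ⟨τ, t1, t2⟩ := h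
  obtain ⟨ρ, r1, r2⟩ := h'
  refine ⟨ρ * τ, by rw [Equiv.Perm.sign_mul, t1, r1, mul_comm], ?_⟩
  exact t2.trans (r2.rename τ)

theorem rzJ.symm {e : ℤˣ} {σ σ' : RPair A} (h : rzJ e σ σ') : rzJ e σ' σ := by
  obtain ⟨τ, t1, t2⟩ := h
  refine ⟨τ⁻¹, by rw [Equiv.Perm.sign_inv, t1], ?_⟩
  have := (t2.rename τ⁻¹).symm
  rw [rzRename_mul, mul_inv_cancel, rzRename_one] at this
  exact this

theorem rzJ.of_reach {σ σ' : RPair A} (h : rzReach σ σ') : rzJ 1 σ σ' :=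
  ⟨1, Equiv.Perm.sign_one, h⟩

/-- Standard diagram of the first kind. -/
def rzDP (a : A) (c0 c1 : Perm A) (σ : RPair A) : Prop :=
  ∃ W W' : List A, rzl (σ false) = a :: W ∧ rzl (σ true) = W' ++ [a] ∧
    W.formPerm = c0 ∧ W'.formPerm = c1

/-- Standard diagram of the second kind. -/
def rzDM (a : A) (c0 c1 : Perm A) (σ : RPair A) : Prop :=
  ∃ W W' : List A, rzl (σ false) = W ++ [a] ∧ rzl (σ true) = a :: W' ∧
    W.formPerm = c0 ∧ W'.formPerm = c1

theorem rz_rot {W W2 : List A} (h1 : W.Nodup) (h2 : W2.Nodup) (h : ∀ x, x ∈ W ↔ x ∈ W2)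
    (hf : W.formPerm = W2.formPerm) : W ~r W2 := by
  rcases (List.formPerm_eq_formPerm_iff h1 h2).1 hf with h' | ⟨h3, h4⟩
  · exact h'
  · have hp : W.Perm W2 := (List.perm_ext_iff_of_nodup h1 h2).2 h
    rcases W with _ | ⟨x, _ | ⟨y, W⟩⟩
    · rw [List.nil_perm.1 hp]
    · rw [List.singleton_perm.1 hp]
    · simp at h3

theorem rz_cons_mem {l W : List A} {a : A} (hl : l.Nodup) (hm : ∀ x, x ∈ l) (h : l = a :: W) :
    W.Nodup ∧ ∀ x, x ∈ W ↔ x ≠ a := by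
  subst h
  rw [List.nodup_cons] at hl
  refine ⟨hl.2, fun x => ⟨?_, ?_⟩⟩
  · rintro h rfl; exact hl.1 h
  · intro hx
    have := hm x
    rw [List.mem_cons] at this
    tauto

theorem rz_concat_mem {l W : List A} {a : A} (hl : l.Nodup) (hm : ∀ x, x ∈ l)
    (h : l = W ++ [a]) : W.Nodup ∧ ∀ x, x ∈ W ↔ x ≠ a := by
  have hp : l.Perm (a :: W) := by rw [h]; exact List.perm_append_singleton a W
  exact rz_cons_mem (hp.nodup_iff.1 hl) (fun x => hp.mem_iff.1 (hm x)) rfl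

theorem rz_eq_of_rows {σ σ' : RPair A} (h0 : rzl (σ false) = rzl (σ' false))
    (h1 : rzl (σ true) = rzl (σ' true)) : σ = σ' := by
  funext ε; cases ε
  · exact rzl_inj h0
  · exact rzl_inj h1

theorem rzDP_unique {a : A} {c0 c1 : Perm A} {σ σ' : RPair A} (h : rzDP a c0 c1 σ)
    (h' : rzDP a c0 c1 σ') : rzReach σ σ' := by
  obtain ⟨W, V, a1, a2, a3, a4⟩ := h
  obtain ⟨W', V', b1, b2, b3, b4⟩ := h'
  have p1 := rz_cons_mem (rzl_nodup _) (rzl_mem _) a1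
  have p2 := rz_concat_mem (rzl_nodup _) (rzl_mem _) a2
  have q1 := rz_cons_mem (rzl_nodup _) (rzl_mem _) b1
  have q2 := rz_concat_mem (rzl_nodup _) (rzl_mem _) b2
  have r1 : W ~r W' := rz_rot p1.1 q1.1 (fun x => (p1.2 x).trans (q1.2 x).symm) (by rw [a3, b3])
  have r2 : V ~r V' := rz_rot p2.1 q2.1 (fun x => (p2.2 x).trans (q2.2 x).symm) (by rw [a4, b4])
  obtain ⟨ρ, k1, k2, k3⟩ := ((rzLR_r1 (U := []) (z := a) (T := V) r1).trans
    (rzLR_l0 (T := W') (U := []) r2)) σ a1 a2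
  have : ρ = σ' := rz_eq_of_rows (by rw [k1, b1]) (by rw [k2, b2])
  rwa [← this]

/-- Same statement for the second kind. -/
theorem rzDM_unique {a : A} {c0 c1 : Perm A} {σ σ' : RPair A} (h : rzDM a c0 c1 σ)
    (h' : rzDM a c0 c1 σ') : rzReach σ σ' := by
  obtain ⟨W, V, a1, a2, a3, a4⟩ := h
  obtain ⟨W', V', b1, b2, b3, b4⟩ := h'
  have p1 := rz_concat_mem (rzl_nodup _) (rzl_mem _) a1
  have p2 := rz_cons_mem (rzl_nodup _) (rzl_mem _) a2
  have q1 := rz_concat_mem (rzl_nodup _) (rzl_mem _) b1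
  have q2 := rz_cons_mem (rzl_nodup _) (rzl_mem _) b2
  have r1 : W ~r W' := rz_rot p1.1 q1.1 (fun x => (p1.2 x).trans (q1.2 x).symm) (by rw [a3, b3])
  have r2 : V ~r V' := rz_rot p2.1 q2.1 (fun x => (p2.2 x).trans (q2.2 x).symm) (by rw [a4, b4])
  obtain ⟨ρ, k1, k2, k3⟩ := ((rzLR_r0 (U := []) (z := a) (T := W) r2).trans
    (rzLR_l1 (T := V') (U := []) r1)) σ a1 a2
  have : ρ = σ' := rz_eq_of_rows (by rw [k1, b1]) (by rw [k2, b2])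
  rwa [← this]

theorem rz_rot_cons {W : List A} {b : A} (h : b ∈ W) : ∃ w, W ~r b :: w := by
  obtain ⟨s, t, rfl⟩ := List.append_of_mem h
  exact ⟨t ++ s, by simpa using (List.isRotated_append (l := s) (l' := b :: t))⟩

theorem rz_rot_concat (w : List A) (b : A) : (b :: w) ~r (w ++ [b]) := by
  simpa using (List.isRotated_append (l := [b]) (l' := w))

theorem rz_map_swap {w : List A} {a b : A} (ha : a ∉ w) (hb : b ∉ w) :
    w.map (swap a b) = w := by
  conv_rhs => rw [← List.map_id w]
  apply List.map_congr_left
  intro x hx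
  rw [id, swap_apply_of_ne_of_ne] <;> rintro rfl <;> contradiction

theorem rz_formPerm_rot {W W' : List A} (h : W ~r W') (hn : W.Nodup) :
    W.formPerm = W'.formPerm := List.formPerm_eq_of_isRotated hn h

theorem rz_pair_exists {t b : List A} (h1 : t.Nodup) (h2 : ∀ x, x ∈ t) (h3 : b.Nodup)
    (h4 : ∀ x, x ∈ b) : ∃ σ : RPair A, rzl (σ false) = t ∧ rzl (σ true) = b := by
  obtain ⟨e0, he0⟩ := rzl_exists t h1 h2
  obtain ⟨e1, he1⟩ := rzl_exists b h3 h4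
  exact ⟨fun ε => if ε then e1 else e0, by simpa using he0, by simpa using he1⟩

/-- Second kind to first kind, with a sign. -/
theorem rzF2 {a b : A} (hab : b ≠ a) {c0 c1 : Perm A} {σ : RPair A} (h : rzDM a c0 c1 σ) :
    ∃ σ', rzDP a c0 c1 σ' ∧ rzJ (-1) σ σ' := by
  obtain ⟨W, V, a1, a2, a3, a4⟩ := h
  have p1 := rz_concat_mem (rzl_nodup _) (rzl_mem _) a1
  have p2 := rz_cons_mem (rzl_nodup _) (rzl_mem _) a2
  obtain ⟨w, hw⟩ := rz_rot_cons ((p1.2 b).2 hab)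
  obtain ⟨v, hv'⟩ := rz_rot_cons ((p2.2 b).2 hab)
  have hv := hv'.trans (rz_rot_concat v b)
  obtain ⟨ρ, k1, k2, k3⟩ := ((rzLR_r0 (U := []) (z := a) (T := W) hv).trans
    (rzLR_l1 (T := v ++ [b]) (U := []) hw)) σ a1 a2
  have n1 := hw.nodup_iff.1 p1.1
  have n2 := hv'.nodup_iff.1 p2.1
  rw [List.nodup_cons] at n1 n2
  have aw : a ∉ w := fun h => (p1.2 a).1 (hw.mem_iff.2 (List.mem_cons_of_mem _ h)) rfl
  have av : a ∉ v := fun h => (p2.2 a).1 (hv'.mem_iff.2 (List.mem_cons_of_mem _ h)) rfl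
  refine ⟨pairRename ρ (swap a b), ⟨w ++ [b], b :: v, ?_, ?_, ?_, ?_⟩, swap a b,
    Equiv.Perm.sign_swap hab.symm, ?_⟩
  · rw [pairRename, rzl_rename, k1]
    simp [rz_map_swap aw n1.1]
  · rw [pairRename, rzl_rename, k2]
    simp [rz_map_swap av n2.1]
  · rw [← a3, rz_formPerm_rot (hw.trans (rz_rot_concat w b)) p1.1]
  · rw [← a4, rz_formPerm_rot hv' p2.1]
  · rw [rzRename_mul, Equiv.swap_mul_self, rzRename_one]; exact k3

/-- Lists of all letters except two. -/
def rzFull (a b : A) (L : List A) : Prop := L.Nodup ∧ ∀ x, x ∈ L ↔ x ≠ a ∧ x ≠ b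

theorem rzFull.rot {a b : A} {L L' : List A} (h : rzFull a b L) (hr : L ~r L') : rzFull a b L' :=
  ⟨hr.nodup_iff.1 h.1, fun x => by rw [← hr.mem_iff]; exact h.2 x⟩

theorem rz_getLast_form (r : A) (Y : List A) (h : (Y ++ [r]).Nodup) (x : A) (Z : List A)
    (hx : Y ++ [r] = x :: Z) : (Y ++ [r]).formPerm r = x := by
  have := List.formPerm_apply_getLast x Z
  have h2 : (x :: Z).getLast (by simp) = r := by
    have : ∀ (l : List A) (hl : l ≠ []), l = Y ++ [r] → l.getLast hl = r := by
      rintro l hl rfl; simp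
    exact this _ _ hx.symm
  rw [h2] at this
  rw [hx, this]

theorem rzM {a b : A} (hab : b ≠ a) {L0 L1 : List A} (hL0 : rzFull a b L0) (hL1 : rzFull a b L1)
    {q s : A} (hq : q ≠ a ∧ q ≠ b) (hs : s ≠ a ∧ s ≠ b) {σ : RPair A}
    (h : rzDP a (swap b q * L0.formPerm) (swap b s * L1.formPerm) σ) :
    ∃ σ', rzDM a (swap b ((L0.formPerm * L1.formPerm⁻¹) s) * L0.formPerm)
      (swap b q * L1.formPerm) σ' ∧ rzReach σ σ' := by
  obtain ⟨U', hU'⟩ := rz_rot_cons ((hL0.2 q).2 hq)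
  obtain ⟨P', hP'⟩ := rz_rot_cons ((hL1.2 s).2 hs)
  have F0 := hL0.rot hU'
  have F1 := hL1.rot hP'
  have f0 : L0.formPerm = (q :: U').formPerm := rz_formPerm_rot hU' hL0.1
  have f1 : L1.formPerm = (s :: P').formPerm := rz_formPerm_rot hP' hL1.1
  obtain ⟨W, r, hWr⟩ : ∃ W r, s :: P' = W ++ [r] :=
    ⟨_, _, (List.dropLast_append_getLast (List.cons_ne_nil s P')).symm⟩
  have hr1 : L1.formPerm r = s := by
    rw [f1, hWr]
    exact rz_getLast_form r W (by rw [← hWr]; exact F1.1) s P' hWr.symm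
  have hr1' : L1.formPerm⁻¹ s = r := by rw [← hr1]; simp
  have hrm : r ∈ s :: P' := by rw [hWr]; simp
  have hr := (F1.2 r).1 hrm
  obtain ⟨U1, U2, hU⟩ := List.append_of_mem ((F0.2 r).2 hr)
  have hqm : q ∈ W ++ [r] := by rw [← hWr]; exact (F1.2 q).2 hq
  obtain ⟨Wa, Wb, hW⟩ := List.append_of_mem hqm
  -- starting pair
  have hb0 : b ∉ q :: U' := fun h => ((F0.2 b).1 h).2 rfl
  have hb1 : b ∉ s :: P' := fun h => ((F1.2 b).1 h).2 rfl
  have ha0 : a ∉ q :: U' := fun h => ((F0.2 a).1 h).1 rfl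
  have ha1 : a ∉ s :: P' := fun h => ((F1.2 a).1 h).1 rfl
  have nt : (a :: ((q :: U') ++ [b])).Nodup := by
    rw [List.nodup_cons]
    constructor
    · rw [List.mem_append, List.mem_singleton]
      rintro (h | h)
      · exact ha0 h
      · exact hab h.symm
    · rw [(List.perm_append_singleton b _).nodup_iff, List.nodup_cons]
      exact ⟨hb0, F0.1⟩
  have nb : ((b :: s :: P') ++ [a]).Nodup := by
    rw [(List.perm_append_singleton a _).nodup_iff, List.nodup_cons, List.nodup_cons]
    refine ⟨?_, hb1, F1.1⟩
    rw [List.mem_cons]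
    rintro (h | h)
    · exact hab h.symm
    · exact ha1 h
  obtain ⟨σ0, z1, z2⟩ := rz_pair_exists nt (by
      intro x
      have := F0.2 x
      by_cases h1 : x = a
      · simp [h1]
      · by_cases h2 : x = b
        · simp [h2]
        · rw [List.mem_cons, List.mem_append]; tauto) nb (by
      intro x
      have := F1.2 x
      by_cases h1 : x = a
      · simp [h1]
      · by_cases h2 : x = b
        · simp [h2]
        · rw [List.mem_append, List.mem_cons]; tauto)
  have hbn0 : (b :: q :: U').Nodup := by rw [List.nodup_cons]; exact ⟨hb0, F0.1⟩
  have hbn1 : (b :: s :: P').Nodup := by rw [List.nodup_cons]; exact ⟨hb1, F1.1⟩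
  have D0 : rzDP a (swap b q * L0.formPerm) (swap b s * L1.formPerm) σ0 := by
    refine ⟨_, _, z1, z2, ?_, ?_⟩
    · rw [← rz_formPerm_rot (rz_rot_concat (q :: U') b) hbn0, List.formPerm_cons_cons, f0]
    · rw [List.formPerm_cons_cons, f1]
  have R0 := rzDP_unique h D0
  -- head and tail decompositions
  obtain ⟨U0, hU0⟩ : ∃ U0, U1 ++ r :: (a :: b :: U2) = q :: U0 := by
    rcases U1 with _ | ⟨x, U1⟩
    · simp only [List.nil_append, List.cons.injEq] at hU
      exact ⟨a :: b :: U2, by rw [hU.1]; rfl⟩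
    · simp only [List.cons_append, List.cons.injEq] at hU
      exact ⟨U1 ++ r :: (a :: b :: U2), by rw [hU.1]; rfl⟩
  obtain ⟨W0, hW0⟩ : ∃ W0, (a :: (Wa ++ [b])) ++ q :: Wb = W0 ++ [r] := by
    rcases List.eq_nil_or_concat Wb with rfl | ⟨Wc, y, rfl⟩
    · have := List.append_inj' hW rfl
      refine ⟨a :: (Wa ++ [b]), ?_⟩
      rw [this.2]
    · have h2 : W ++ [r] = (Wa ++ q :: Wc) ++ [y] := by rw [hW]; simp
      have := List.append_inj' h2 rfl
      refine ⟨(a :: (Wa ++ [b])) ++ q :: Wc, ?_⟩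
      rw [this.2]; simp
  -- the path
  have path : rzLR (a :: ((q :: U') ++ [b])) ((b :: s :: P') ++ [a])
      ((U1 ++ r :: (b :: U2)) ++ [a]) (a :: (Wa ++ b :: q :: Wb)) := by
    have e1 : rzLR (a :: ((q :: U') ++ [b])) ((b :: s :: P') ++ [a])
        (a :: ((q :: U') ++ [b])) (b :: (a :: s :: P')) :=
      rzLR_r0 (T := a :: q :: U') (U := []) (z := b) (V := (s :: P') ++ [a]) (V' := a :: s :: P')
        (rz_rot_concat (s :: P') a).symm
    have e2 : rzLR (a :: ((q :: U') ++ [b])) (b :: (a :: s :: P'))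
        ((a :: U1 ++ [r]) ++ b :: U2) (b :: (a :: s :: P')) := by
      have := rzLR_r1 (T := b :: a :: W) (z := r) (U := a :: U1) (V := U2 ++ [b]) (V' := b :: U2)
        (rz_rot_concat U2 b).symm
      rw [hU, hWr]
      simpa using this
    have e3 : rzLR ((a :: U1 ++ [r]) ++ b :: U2) (b :: (a :: s :: P'))
        (U1 ++ r :: (a :: b :: U2)) (b :: (a :: s :: P')) := by
      have := rzLR_l1 (z := b) (T := a :: s :: P') (U := U2) (V := a :: (U1 ++ [r]))
        (V' := (U1 ++ [r]) ++ [a]) (rz_rot_concat (U1 ++ [r]) a)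
      simpa using this
    have e4 : rzLR (U1 ++ r :: (a :: b :: U2)) (b :: (a :: s :: P'))
        (U1 ++ r :: (a :: b :: U2)) ((a :: (Wa ++ [b])) ++ q :: Wb) := by
      have := rzLR_l0 (z := q) (T := U0) (U := Wb) (V := b :: (a :: Wa))
        (V' := (a :: Wa) ++ [b]) (rz_rot_concat (a :: Wa) b)
      rw [hU0, hWr, hW]
      simpa using this
    have e5 : rzLR (U1 ++ r :: (a :: b :: U2)) ((a :: (Wa ++ [b])) ++ q :: Wb)
        ((U1 ++ r :: (b :: U2)) ++ [a]) ((a :: (Wa ++ [b])) ++ q :: Wb) := by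
      have := rzLR_r1 (z := r) (T := W0) (U := U1) (V := a :: (b :: U2))
        (V' := (b :: U2) ++ [a]) (rz_rot_concat (b :: U2) a)
      rw [hW0]
      simpa using this
    have := (((e1.trans e2).trans e3).trans e4).trans e5
    simpa using this
  obtain ⟨σ', k1, k2, k3⟩ := path σ0 z1 z2
  refine ⟨σ', ⟨_, _, k1, k2, ?_, ?_⟩, R0.trans k3⟩
  · have p1 := rz_concat_mem (rzl_nodup _) (rzl_mem _) k1
    have hrot : (U1 ++ r :: (b :: U2)) ~r (b :: ((U2 ++ U1) ++ [r])) := by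
      simpa using (List.isRotated_append (l := U1 ++ [r]) (l' := b :: U2))
    rw [rz_formPerm_rot hrot p1.1]
    obtain ⟨x, Z, hxZ⟩ : ∃ x Z, (U2 ++ U1) ++ [r] = x :: Z :=
      List.exists_cons_of_ne_nil (by simp)
    have hrot2 : (q :: U') ~r ((U2 ++ U1) ++ [r]) := by
      rw [hU]
      simpa using (List.isRotated_append (l := U1 ++ [r]) (l' := U2))
    have hf0 : L0.formPerm = ((U2 ++ U1) ++ [r]).formPerm := by
      rw [f0, rz_formPerm_rot hrot2 F0.1]
    have hx : L0.formPerm r = x := by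
      rw [hf0]
      exact rz_getLast_form r _ (hrot2.nodup_iff.1 F0.1) x Z hxZ
    rw [Equiv.Perm.mul_apply, hr1', hx, hxZ, List.formPerm_cons_cons, hf0, hxZ]
  · have p2 := rz_cons_mem (rzl_nodup _) (rzl_mem _) k2
    have hrot : (Wa ++ b :: q :: Wb) ~r (b :: q :: (Wb ++ Wa)) := by
      simpa using (List.isRotated_append (l := Wa) (l' := b :: q :: Wb))
    rw [rz_formPerm_rot hrot p2.1, List.formPerm_cons_cons]
    have hrot2 : (s :: P') ~r (q :: (Wb ++ Wa)) := by
      rw [hWr, hW]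
      simpa using (List.isRotated_append (l := Wa) (l' := q :: Wb))
    rw [f1, rz_formPerm_rot hrot2 F1.1]

theorem rzMF {a b : A} (hab : b ≠ a) {L0 L1 : List A} (hL0 : rzFull a b L0) (hL1 : rzFull a b L1)
    {q s : A} (hq : q ≠ a ∧ q ≠ b) (hs : s ≠ a ∧ s ≠ b) {σ : RPair A}
    (h : rzDP a (swap b q * L0.formPerm) (swap b s * L1.formPerm) σ) :
    ∃ σ', rzDP a (swap b ((L0.formPerm * L1.formPerm⁻¹) s) * L0.formPerm)
      (swap b q * L1.formPerm) σ' ∧ rzJ (-1) σ σ' := by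
  obtain ⟨σ1, h1, h2⟩ := rzM hab hL0 hL1 hq hs h
  obtain ⟨σ2, h3, h4⟩ := rzF2 hab h1
  exact ⟨σ2, h3, by simpa using (rzJ.of_reach h2).trans h4⟩

end Diagrams


section Loops

variable [DecidableEq A]

theorem rz_split {a b d : A} {W : List A} (hW : W.Nodup ∧ ∀ x, x ∈ W ↔ x ≠ a) (hab : b ≠ a)
    (hd : d ≠ a ∧ d ≠ b) : ∃ L, rzFull a b L ∧ (W.formPerm b ≠ a ∧ W.formPerm b ≠ b) ∧
      W.formPerm = swap b (W.formPerm b) * L.formPerm := by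
  obtain ⟨w, hw⟩ := rz_rot_cons ((hW.2 b).2 hab)
  have n := hw.nodup_iff.1 hW.1
  have hm : ∀ x, x ∈ b :: w ↔ x ≠ a := fun x => by rw [← hw.mem_iff]; exact hW.2 x
  rcases w with _ | ⟨q, w⟩
  · have := (hm d).2 hd.1
    simp [hd.2] at this
  · have hf := rz_formPerm_rot hw hW.1
    rw [List.formPerm_cons_cons] at hf
    have n' := List.nodup_cons.1 n
    have hL : rzFull a b (q :: w) := by
      refine ⟨n'.2, fun x => ?_⟩
      constructor
      · intro hx
        refine ⟨(hm x).1 (List.mem_cons_of_mem _ hx), ?_⟩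
        rintro rfl
        exact n'.1 hx
      · rintro ⟨h1, h2⟩
        have := (hm x).2 h1
        rw [List.mem_cons] at this
        tauto
    have hq : W.formPerm b = q := by
      rw [hf, Perm.mul_apply, List.formPerm_apply_of_notMem n'.1, swap_apply_left]
    refine ⟨q :: w, hL, ?_, ?_⟩
    · rw [hq]; exact (hL.2 q).1 (by simp)
    · rw [hq]; exact hf

theorem rz_extract {a b : A} {c0 c1 : Perm A} {σ : RPair A} (h : rzDP a c0 c1 σ) (hab : b ≠ a)
    (hb : c0 b ≠ b) : ∃ L0 L1, rzFull a b L0 ∧ rzFull a b L1 ∧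
      (c0 b ≠ a ∧ c0 b ≠ b) ∧ (c1 b ≠ a ∧ c1 b ≠ b) ∧
      c0 = swap b (c0 b) * L0.formPerm ∧ c1 = swap b (c1 b) * L1.formPerm := by
  obtain ⟨W, V, a1, a2, rfl, rfl⟩ := h
  have p1 := rz_cons_mem (rzl_nodup _) (rzl_mem _) a1
  have p2 := rz_concat_mem (rzl_nodup _) (rzl_mem _) a2
  have hd : W.formPerm b ≠ a := (p1.2 _).1 (List.formPerm_apply_mem_of_mem ((p1.2 b).2 hab))
  obtain ⟨L0, e1, e2, e3⟩ := rz_split p1 hab ⟨hd, hb⟩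
  obtain ⟨L1, f1, f2, f3⟩ := rz_split p2 hab ⟨hd, hb⟩
  exact ⟨L0, L1, e1, f1, e2, f2, e3, f3⟩

theorem rzFull.fix {a b : A} {L : List A} (h : rzFull a b L) : L.formPerm a = a ∧ L.formPerm b = b :=
  ⟨List.formPerm_apply_of_notMem (fun h' => ((h.2 a).1 h').1 rfl),
    List.formPerm_apply_of_notMem (fun h' => ((h.2 b).1 h').2 rfl)⟩

theorem rz_fix_ne {f : Perm A} {a b : A} (h : f a = a ∧ f b = b) {x : A} (hx : x ≠ a ∧ x ≠ b) :
    f x ≠ a ∧ f x ≠ b := by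
  constructor
  · intro h'; exact hx.1 (f.injective (h'.trans h.1.symm))
  · intro h'; exact hx.2 (f.injective (h'.trans h.2.symm))

theorem rz_Qfix {a b : A} {L0 L1 : List A} (hL0 : rzFull a b L0) (hL1 : rzFull a b L1) :
    (L0.formPerm * L1.formPerm⁻¹) a = a ∧ (L0.formPerm * L1.formPerm⁻¹) b = b := by
  have h0 := hL0.fix
  have h1 := hL1.fix
  constructor
  · rw [Perm.mul_apply, Perm.inv_eq_iff_eq.2 h1.1.symm, h0.1]
  · rw [Perm.mul_apply, Perm.inv_eq_iff_eq.2 h1.2.symm, h0.2]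

theorem rz_iter {a b : A} (hab : b ≠ a) {L0 L1 : List A} (hL0 : rzFull a b L0)
    (hL1 : rzFull a b L1) {q s : A} (hq : q ≠ a ∧ q ≠ b) (hs : s ≠ a ∧ s ≠ b) {σ : RPair A}
    (h : rzDP a (swap b q * L0.formPerm) (swap b s * L1.formPerm) σ) (j : ℕ) :
    ∃ σ', rzDP a (swap b (((L0.formPerm * L1.formPerm⁻¹) ^ j) q) * L0.formPerm)
      (swap b (((L0.formPerm * L1.formPerm⁻¹) ^ j) s) * L1.formPerm) σ' ∧ rzJ 1 σ σ' := by
  have hQ := rz_Qfix hL0 hL1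
  generalize hQ' : L0.formPerm * L1.formPerm⁻¹ = Q' at *
  have hfix : ∀ j, (Q' ^ j) a = a ∧ (Q' ^ j) b = b := fun j =>
    ⟨Perm.pow_apply_eq_self_of_apply_eq_self hQ.1 j, Perm.pow_apply_eq_self_of_apply_eq_self hQ.2 j⟩
  induction j with
  | zero => exact ⟨σ, by simpa using h, rzJ.of_reach (rzReach.refl _)⟩
  | succ j ih =>
    obtain ⟨σ1, h1, h2⟩ := ih
    have hq1 := rz_fix_ne (hfix j) hq
    have hs1 := rz_fix_ne (hfix j) hs
    obtain ⟨σ2, h3, h4⟩ := rzMF hab hL0 hL1 hq1 hs1 h1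
    rw [hQ'] at h3
    have hs2 := rz_fix_ne hQ hs1
    obtain ⟨σ3, h5, h6⟩ := rzMF hab hL0 hL1 hs2 hq1 h3
    rw [hQ'] at h5
    refine ⟨σ3, ?_, by simpa using (h2.trans h4).trans h6⟩
    rw [pow_succ']
    exact h5

theorem rzcs_period (Q : Perm A) (b : A) : rzcs Q b = Function.minimalPeriod Q b := by
  classical
  haveI : Fintype (MulAction.orbit (Subgroup.zpowers Q) b) := Fintype.ofFinite _
  have h := MulAction.minimalPeriod_eq_card (a := Q) (b := b)
  have h2 : Function.minimalPeriod Q b = Function.minimalPeriod (fun x => Q • x) b := rfl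
  rw [h2, h, rzcs, ← Nat.card_eq_fintype_card]
  have : {c | Q.SameCycle b c} = MulAction.orbit (Subgroup.zpowers Q) b := by
    ext c
    constructor
    · rintro ⟨i, hi⟩
      exact ⟨⟨Q ^ i, i, rfl⟩, hi⟩
    · rintro ⟨⟨_, i, rfl⟩, hi⟩
      exact ⟨i, hi⟩
  rw [this]
  rfl

theorem rzcs_conj (Q g : Perm A) (b : A) : rzcs (g * Q * g⁻¹) b = rzcs Q (g⁻¹ b) := by
  have : {c | (g * Q * g⁻¹).SameCycle b c} = g '' {c | Q.SameCycle (g⁻¹ b) c} := by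
    ext c
    rw [Set.mem_ofPred_eq, Perm.sameCycle_conj]
    constructor
    · intro h; exact ⟨g⁻¹ c, h, by simp⟩
    · rintro ⟨d, hd, rfl⟩; simpa using hd
  rw [rzcs, this, Set.ncard_image_of_injective _ g.injective, rzcs]

theorem rz_period1 {Q Q' : Perm A} {b q s : A} (hQ : Q = swap b q * Q' * swap b s)
    (hs : s ≠ b) (hb : Q' b = b) (hbq : ¬ Q.SameCycle b q) (i : ℕ)
    (hi : i < Function.minimalPeriod Q b) :
    (Q' ^ (i + 1)) s = swap b q ((Q ^ (i + 1)) b) := by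
  have hsq : Q s = q := by rw [hQ]; simp [hb]
  have hss : Q.SameCycle s q := ⟨1, by simpa using hsq⟩
  have hy : ∀ y, y ≠ b → y ≠ s → Q' y = swap b q (Q y) := by
    intro y h1 h2
    rw [hQ]; simp [swap_apply_of_ne_of_ne h1 h2]
  induction i with
  | zero => rw [hQ]; simp
  | succ i ih =>
    have ih := ih (by omega)
    have hc : Q.SameCycle b ((Q ^ (i + 1)) b) := ⟨((i + 1 : ℕ) : ℤ), by rw [zpow_natCast]⟩
    have y1 : (Q ^ (i + 1)) b ≠ b := by
      intro h
      have h' : Function.IsPeriodicPt Q (i + 1) b := by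
        rw [Function.IsPeriodicPt, Function.IsFixedPt, Perm.iterate_eq_pow]; exact h
      have := h'.minimalPeriod_le (by omega)
      omega
    have y2 : (Q ^ (i + 1)) b ≠ q := fun h => hbq (h ▸ hc)
    have y3 : (Q ^ (i + 1)) b ≠ s := fun h => hbq ((h ▸ hc).trans hss)
    rw [swap_apply_of_ne_of_ne y1 y2] at ih
    rw [pow_succ', Perm.mul_apply, ih, hy _ y1 y3, pow_succ' Q (i + 1), Perm.mul_apply]

theorem rz_period2 {Q Q' : Perm A} {b q s : A} (hQ : Q = swap b q * Q' * swap b s)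
    (hs : s ≠ b) (hb : Q' b = b) (hbq : ¬ Q.SameCycle b q) (i : ℕ)
    (hi : i < Function.minimalPeriod Q q) :
    (Q' ^ i) q = (Q ^ i) q := by
  have hsq : Q s = q := by rw [hQ]; simp [hb]
  have hy : ∀ y, y ≠ b → y ≠ s → Q' y = swap b q (Q y) := by
    intro y h1 h2
    rw [hQ]; simp [swap_apply_of_ne_of_ne h1 h2]
  have hper : ∀ i, i + 1 < Function.minimalPeriod Q q → (Q ^ (i + 1)) q ≠ q := by
    intro i hi h
    have h' : Function.IsPeriodicPt Q (i + 1) q := by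
      rw [Function.IsPeriodicPt, Function.IsFixedPt, Perm.iterate_eq_pow]; exact h
    have := h'.minimalPeriod_le (by omega)
    omega
  have hnb : ∀ i : ℕ, (Q ^ i) q ≠ b := fun i h =>
    hbq (Perm.SameCycle.symm ⟨i, by simpa using h⟩)
  induction i with
  | zero => simp
  | succ i ih =>
    have ih := ih (by omega)
    have e : (Q ^ (i + 1)) q = Q ((Q ^ i) q) := by rw [pow_succ', Perm.mul_apply]
    have y3 : (Q ^ i) q ≠ s := by
      intro h
      apply hper i hi
      rw [e, h, hsq]
    rw [pow_succ', Perm.mul_apply, ih, hy _ (hnb i) y3, ← e,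
      swap_apply_of_ne_of_ne (hnb _) (hper i hi)]

theorem rz_quot {b q s : A} (f0 f1 : Perm A) :
    (swap b q * f0) * (swap b s * f1)⁻¹ = swap b q * (f0 * f1⁻¹) * swap b s := by
  rw [mul_inv_rev, swap_inv]; simp only [mul_assoc]

theorem rz_loop1 {a b : A} {c0 c1 : Perm A} {σ : RPair A} (h : rzDP a c0 c1 σ) (hab : b ≠ a)
    (hb : ¬ (c0 * c1⁻¹).SameCycle b (c0 b))
    (hk : rzcs (c0 * c1⁻¹) b = rzcs (c0 * c1⁻¹) (c0 b)) : rzJ (-1) σ σ := by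
  have hb' : c0 b ≠ b := by
    intro h'; rw [h'] at hb; exact hb (Perm.SameCycle.refl _ _)
  obtain ⟨L0, L1, hL0, hL1, hq, hs, e0, e1⟩ := rz_extract h hab hb'
  have hQf := rz_Qfix hL0 hL1
  generalize hqq : c0 b = q at *
  generalize hss : c1 b = s at *
  have hQ : c0 * c1⁻¹ = swap b q * (L0.formPerm * L1.formPerm⁻¹) * swap b s := by
    rw [e0, e1]; exact rz_quot _ _
  generalize hQQ : c0 * c1⁻¹ = Q at *
  have hsq : Q s = q := by
    rw [hQ, Perm.mul_apply, Perm.mul_apply, swap_apply_right, hQf.2, swap_apply_left]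
  rw [rzcs_period, rzcs_period] at hk
  have hpos : 0 < Function.minimalPeriod Q b := by
    rw [← rzcs_period, rzcs, Set.ncard_pos]; exact ⟨b, Perm.SameCycle.refl _ _⟩
  have hD := h
  rw [e0, e1] at hD
  obtain ⟨σ1, h1, h2⟩ := rz_iter hab hL0 hL1 hq hs hD (Function.minimalPeriod Q b - 1)
  have hfix : ∀ j, ((L0.formPerm * L1.formPerm⁻¹) ^ j) a = a ∧
      ((L0.formPerm * L1.formPerm⁻¹) ^ j) b = b := fun j =>
    ⟨Perm.pow_apply_eq_self_of_apply_eq_self hQf.1 j,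
      Perm.pow_apply_eq_self_of_apply_eq_self hQf.2 j⟩
  obtain ⟨σ2, h3, h4⟩ := rzMF hab hL0 hL1 (rz_fix_ne (hfix _) hq) (rz_fix_ne (hfix _) hs) h1
  have r1 := rz_period1 hQ hs.2 hQf.2 hb (Function.minimalPeriod Q b - 1) (by omega)
  have r2 := rz_period2 hQ hs.2 hQf.2 hb (Function.minimalPeriod Q b - 1) (by omega)
  have p1 : (Q ^ (Function.minimalPeriod Q b - 1 + 1)) b = b := by
    rw [Nat.sub_add_cancel hpos, ← Perm.iterate_eq_pow]
    exact Function.isPeriodicPt_minimalPeriod Q b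
  have p2 : (Q ^ (Function.minimalPeriod Q b - 1)) q = s := by
    apply Q.injective
    rw [hsq, ← Perm.mul_apply, ← pow_succ', Nat.sub_add_cancel hpos, hk, ← Perm.iterate_eq_pow]
    exact Function.isPeriodicPt_minimalPeriod Q q
  rw [p1, swap_apply_left] at r1
  rw [p2] at r2
  rw [← Perm.mul_apply, ← pow_succ', r1, r2, ← e0, ← e1] at h3
  simpa using (h2.trans h4).trans (rzJ.of_reach (rzDP_unique h3 h))

theorem rz_loop {a : A} (m : ℕ) : ∀ (c0 c1 : Perm A) (σ : RPair A) (b : A), rzDP a c0 c1 σ → b ≠ a →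
    ¬ (c0 * c1⁻¹).SameCycle b ((c0 ^ m) b) →
    rzcs (c0 * c1⁻¹) b = rzcs (c0 * c1⁻¹) ((c0 ^ m) b) → rzJ (-1) σ σ := by
  induction m using Nat.strong_induction_on with
  | _ m IH =>
  intro c0 c1 σ b h hab hb hk
  have hca : c0 a = a := by
    obtain ⟨W, V, a1, a2, a3, a4⟩ := h
    rw [← a3]
    apply List.formPerm_apply_of_notMem
    intro hm
    exact ((rz_cons_mem (rzl_nodup _) (rzl_mem _) a1).2 a).1 hm rfl
  by_cases hA : ∃ t, 0 < t ∧ t < m ∧ (c0 * c1⁻¹).SameCycle b ((c0 ^ t) b)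
  · obtain ⟨t, t1, t2, t3⟩ := hA
    have e : (c0 ^ (m - t)) ((c0 ^ t) b) = (c0 ^ m) b := by
      rw [← Perm.mul_apply, ← pow_add, Nat.sub_add_cancel t2.le]
    refine IH (m - t) (by omega) c0 c1 σ ((c0 ^ t) b) h ?_ ?_ ?_
    · intro h'
      apply hab
      apply (c0 ^ t).injective
      rw [h', Perm.pow_apply_eq_self_of_apply_eq_self hca t]
    · rw [e]; exact fun h' => hb (t3.trans h')
    · rw [e, ← rzcs_congr t3, hk]
  push Not at hA
  rcases m with _ | _ | m
  · exact absurd (Perm.SameCycle.refl _ _) hb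
  · rw [zero_add, pow_one] at hb hk
    exact rz_loop1 h hab hb hk
  have hbq := hA 1 (by omega) (by omega)
  rw [pow_one] at hbq
  have hb' : c0 b ≠ b := by
    intro h'; rw [h'] at hbq; exact hbq (Perm.SameCycle.refl _ _)
  have hn : ∀ i, 0 < i → i ≤ m + 2 → ¬ (c0 * c1⁻¹).SameCycle b ((c0 ^ i) b) := by
    intro i h1 h2
    rcases h2.lt_or_eq with h2 | h2
    · exact hA i h1 h2
    · rw [h2]; exact hb
  have hnb : ∀ i, 0 < i → i ≤ m + 2 → (c0 ^ i) b ≠ b := by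
    intro i h1 h2 h'
    apply hn i h1 h2
    rw [h']
  have hnq : ∀ i, 0 < i → i + 1 ≤ m + 2 → (c0 ^ (i + 1)) b ≠ c0 b := by
    intro i h1 h2 h'
    rw [pow_succ', Perm.mul_apply] at h'
    exact hnb i h1 (by omega) (c0.injective h')
  obtain ⟨L0, L1, hL0, hL1, hq, hs, e0, e1⟩ := rz_extract h hab hb'
  have hQf := rz_Qfix hL0 hL1
  have hD := h
  rw [e0, e1] at hD
  obtain ⟨σ', h1, h2⟩ := rzMF hab hL0 hL1 hq hs hD
  have hQ : c0 * c1⁻¹ = swap b (c0 b) * (L0.formPerm * L1.formPerm⁻¹) * swap b (c1 b) := by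
    conv_lhs => rw [e0, e1]
    exact rz_quot _ _
  have hx : (L0.formPerm * L1.formPerm⁻¹) (c1 b) = swap b (c0 b) ((c0 * c1⁻¹) b) := by
    rw [hQ]; simp
  have hQs : swap b ((L0.formPerm * L1.formPerm⁻¹) (c1 b)) * L0.formPerm *
      (swap b (c0 b) * L1.formPerm)⁻¹ = swap b (c0 b) * (c0 * c1⁻¹) * (swap b (c0 b))⁻¹ := by
    rw [rz_quot, hQ, swap_inv]
    congr 1
    have hsw := Equiv.swap_apply_apply (L0.formPerm * L1.formPerm⁻¹) b (c1 b)
    rw [hQf.2] at hsw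
    rw [hsw]
    simp [mul_assoc]
  generalize hxx : (L0.formPerm * L1.formPerm⁻¹) (c1 b) = x at *
  have hstep : swap b x * L0.formPerm = swap b x * (swap b (c0 b) * c0) := by
    congr 1
    have := congrArg (fun g => swap b (c0 b) * g) e0
    simp only [← mul_assoc, swap_mul_self, one_mul] at this
    exact this.symm
  have hpow : ∀ i, i ≤ m + 1 → ((swap b x * L0.formPerm) ^ i) (c0 b) = (c0 ^ (i + 1)) b := by
    intro i
    induction i with
    | zero => intro _; simp
    | succ i ih =>
      intro hi
      have nx : (c0 ^ (i + 1 + 1)) b ≠ x := by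
        intro h'
        have hc : (c0 * c1⁻¹).SameCycle b ((c0 * c1⁻¹) b) := ⟨1, by simp⟩
        by_cases hz : (c0 * c1⁻¹) b = b
        · rw [hx, hz, swap_apply_left] at h'
          exact hnq (i + 1) (by omega) (by omega) h'
        · rw [hx, swap_apply_of_ne_of_ne hz (fun h'' => hbq (by rw [h''] at hc; exact hc))] at h'
          exact hn (i + 1 + 1) (by omega) (by omega) (h' ▸ hc)
      rw [pow_succ', Perm.mul_apply, ih (by omega), hstep, Perm.mul_apply, Perm.mul_apply,
        ← Perm.mul_apply c0, ← pow_succ',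
        swap_apply_of_ne_of_ne (hnb _ (by omega) (by omega)) (hnq (i + 1) (by omega) (by omega)),
        swap_apply_of_ne_of_ne (hnb _ (by omega) (by omega)) nx]
  have hp := hpow (m + 1) le_rfl
  have w1 := hnb (m + 2) (by omega) le_rfl
  have w2 := hnq (m + 1) (by omega) le_rfl
  have hr := IH (m + 1) (by omega) _ _ σ' (c0 b) h1 hq.1
    (by
      rw [hQs, hp, Perm.sameCycle_conj, swap_inv, swap_apply_right, swap_apply_of_ne_of_ne w1 w2]
      exact hb)
    (by
      rw [hQs, hp, rzcs_conj, rzcs_conj, swap_inv, swap_apply_right, swap_apply_of_ne_of_ne w1 w2]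
      exact hk)
  simpa using (h2.trans hr).trans h2.symm

/-- Two distinct cycles of equal length give an odd loop. -/
theorem rz_odd {a b c : A} {c0 c1 : Perm A} {σ : RPair A} (h : rzDP a c0 c1 σ) (hb : b ≠ a)
    (hc : c ≠ a) (hbc : ¬ (c0 * c1⁻¹).SameCycle b c)
    (hk : rzcs (c0 * c1⁻¹) b = rzcs (c0 * c1⁻¹) c) : rzJ (-1) σ σ := by
  obtain ⟨m, hm⟩ : ∃ m : ℕ, (c0 ^ m) b = c := by
    obtain ⟨W, V, a1, a2, a3, a4⟩ := h
    have p := rz_cons_mem (rzl_nodup _) (rzl_mem _) a1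
    obtain ⟨w, hw⟩ := rz_rot_cons ((p.2 b).2 hb)
    have hn := hw.nodup_iff.1 p.1
    obtain ⟨i, hi, hi'⟩ := List.mem_iff_getElem.1 (hw.mem_iff.1 ((p.2 c).2 hc))
    refine ⟨i, ?_⟩
    rw [← a3, rz_formPerm_rot hw p.1]
    have := List.formPerm_pow_apply_getElem (b :: w) hn i 0 (by simp)
    simp only [List.getElem_cons_zero, zero_add] at this
    rw [this, ← hi']
    congr 1
    exact Nat.mod_eq_of_lt hi
  subst hm
  exact rz_loop m c0 c1 σ b h hb hbc hk

end Loops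


section Final

variable [DecidableEq A]

/-- Irreducibility in terms of lists. -/
def rzIrr (t b : List A) : Prop := ∀ T1 T2 B1 B2, t = T1 ++ T2 → b = B1 ++ B2 →
  (∀ x, x ∈ T1 ↔ x ∈ B1) → (∀ x, x ∉ T1) ∨ (∀ x, x ∈ T1)

theorem rzIrr.symm {t b : List A} (h : rzIrr t b) : rzIrr b t := by
  intro T1 T2 B1 B2 h1 h2 h3
  rcases h B1 B2 T1 T2 h2 h1 (fun x => (h3 x).symm) with h' | h'
  · exact Or.inl (fun x hx => h' x ((h3 x).1 hx))
  · exact Or.inr (fun x => (h3 x).2 (h' x))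

theorem rzIrr.rot {T U V V' : List A} {z : A} (hn : (T ++ [z]).Nodup) (hm : ∀ x, x ∈ T ++ [z])
    (h : rzIrr (T ++ [z]) (U ++ z :: V)) : rzIrr (T ++ [z]) (U ++ z :: V') := by
  intro T1 T2 B1 B2 h1 h2 h3
  by_cases hz : z ∈ T1
  · right
    rcases List.eq_nil_or_concat T2 with rfl | ⟨T3, y, rfl⟩
    · rw [List.append_nil] at h1
      rw [← h1]; exact hm
    · exfalso
      have e : T ++ [z] = (T1 ++ T3) ++ [y] := by rw [h1]; simp
      have e2 := List.append_inj' e rfl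
      rw [e2.1] at hn
      have := List.nodup_append.1 hn
      exact this.2.2 z (by simp [hz]) z (by simp) rfl
  · have hzB : z ∉ B1 := fun h' => hz ((h3 z).2 h')
    rcases List.append_eq_append_iff.1 h2 with ⟨as, e1, e2⟩ | ⟨bs, e1, e2⟩
    · rcases as with _ | ⟨y, as⟩
      · rw [List.append_nil] at e1
        exact h T1 T2 U (z :: V) h1 rfl (by rw [← e1]; exact h3)
      · rw [List.cons_append, List.cons.injEq] at e2
        exact absurd (by rw [e1, e2.1]; simp) hzB
    · exact h T1 T2 B1 (bs ++ z :: V) h1 (by rw [e1]; simp) h3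

theorem rz_irr_list {π : RPair A} (hπ : PairIrreducible π) :
    rzIrr (rzl (π false)) (rzl (π true)) := by
  intro T1 T2 B1 B2 h1 h2 h3
  rcases T1 with _ | ⟨y, T1⟩
  · left; simp
  right
  have n1 : (y :: T1).Nodup := by
    have := rzl_nodup (π false); rw [h1] at this; exact (List.nodup_append.1 this).1
  have n2 : B1.Nodup := by
    have := rzl_nodup (π true); rw [h2] at this; exact (List.nodup_append.1 this).1
  have hl : (y :: T1).length = B1.length := ((List.perm_ext_iff_of_nodup n1 n2).2 h3).length_eq
  have l1 := rzl_length (π false)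
  rw [h1, List.length_append] at l1
  simp only [List.length_cons] at l1 hl
  have := hπ ⟨T1.length, by omega⟩ (by
    intro x hx
    rw [Fin.le_def] at hx ⊢
    simp only at hx ⊢
    rw [← rzl_idx] at hx ⊢
    have hxT : x ∈ y :: T1 := by
      by_contra hc
      rw [h1, List.idxOf_append_of_notMem hc, List.length_cons] at hx
      omega
    have hxB := (h3 x).1 hxT
    have := List.idxOf_lt_length_of_mem hxB
    rw [h2, List.idxOf_append_of_mem hxB]
    omega)
  simp only at this
  have hT2 : T2 = [] := List.eq_nil_of_length_eq_zero (by omega)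
  intro x
  have := rzl_mem (π false) x
  rwa [h1, hT2, List.append_nil] at this

theorem rz_step0 (hN : 2 ≤ Fintype.card A) (k : ℕ) : ∀ (ε : Bool) (π : RPair A) (T U V : List A)
    (z : A), rzIrr (rzl (π ε)) (rzl (π (!ε))) → rzl (π ε) = T ++ [z] →
    rzl (π (!ε)) = U ++ z :: V → U.length = k →
    ∃ (σ : RPair A) (a : A) (W W' : List A), rzRR π σ ∧ rzl (σ false) = a :: W ∧
      rzl (σ true) = W' ++ [a] := by
  induction k using Nat.strong_induction_on with
  | _ k IH =>
  intro ε π T U V z hI h0 h1 hk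
  have m0 := rz_concat_mem (rzl_nodup _) (rzl_mem _) h0
  have hlen : U.length + 1 + V.length = T.length + 1 := by
    have a1 := rzl_length (π ε)
    have a2 := rzl_length (π (!ε))
    rw [h0] at a1; rw [h1] at a2
    simp at a1 a2
    omega
  have hn1 := rzl_nodup (π (!ε))
  have hm1 := rzl_mem (π (!ε))
  rw [h1] at hn1 hm1
  rcases U with _ | ⟨u0, U⟩
  · cases ε
    · rcases T with _ | ⟨a, T⟩
      · have a1 := rzl_length (π false)
        rw [h0] at a1; simp at a1; omega
      · have haz : a ≠ z := (m0.2 a).1 (by simp)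
        have haV : a ∈ V := by
          have := hm1 a
          simpa [haz] using this
        obtain ⟨w, hw⟩ := rz_rot_cons haV
        obtain ⟨π', e1, e2, e3⟩ := rzmv false h0 h1 (hw.trans (rz_rot_concat w a))
        exact ⟨π', a, T ++ [z], z :: w, e3, by rw [e1, h0]; rfl, by simpa using e2⟩
    · refine ⟨π, z, V, T, ⟨Relation.ReflTransGen.refl, Relation.ReflTransGen.refl⟩, ?_, h0⟩
      simpa using h1
  · set U' := u0 :: U with hU'
    have hUT : U'.length ≤ T.length := by omega
    obtain ⟨y, hy1, hy2⟩ : ∃ y, y ∈ T.take U'.length ∧ y ∉ U' := by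
      by_contra hc
      push Not at hc
      have nU : U'.Nodup := (List.nodup_append.1 hn1).1
      have nT : (T.take U'.length).Nodup := m0.1.sublist (List.take_sublist _ _)
      have hp : (T.take U'.length).Perm U' :=
        (List.subperm_of_subset nT hc).perm_of_length_le (by simp; omega)
      rcases hI (T.take U'.length) (T.drop U'.length ++ [z]) U' (z :: V)
        (by rw [h0, ← List.append_assoc, List.take_append_drop]) h1
        (fun x => hp.mem_iff) with h' | h'
      · exact h' u0 (hp.mem_iff.2 (by simp [hU']))
      · exact (m0.2 z).1 (List.mem_of_mem_take (h' z)) rfl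
    have hyz : y ≠ z := (m0.2 y).1 (List.mem_of_mem_take hy1)
    have hyV : y ∈ V := by
      rcases List.mem_append.1 (hm1 y) with h' | h'
      · exact absurd h' hy2
      · rcases List.mem_cons.1 h' with h' | h'
        · exact absurd h' hyz
        · exact h'
    obtain ⟨w, hw⟩ := rz_rot_cons hyV
    obtain ⟨π', e1, e2, e3⟩ := rzmv ε h0 h1 (hw.trans (rz_rot_concat w y))
    obtain ⟨P, R, hPR⟩ := List.append_of_mem hy1
    have hPl : P.length < U'.length := by
      have := congrArg List.length hPR
      simp only [List.length_take, List.length_append, List.length_cons] at this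
      simp only [hU', List.length_cons] at *
      omega
    have hT : T = P ++ y :: (R ++ T.drop U'.length) := by
      conv_lhs => rw [← List.take_append_drop U'.length T, hPR]
      simp
    have hI' : rzIrr (rzl (π' (!ε))) (rzl (π' (!(!ε)))) := by
      rw [Bool.not_not, e1, e2, h0]
      apply rzIrr.symm
      have hn0 := rzl_nodup (π ε)
      have hm0 := rzl_mem (π ε)
      rw [h0] at hn0 hm0
      rw [h0, h1] at hI
      exact rzIrr.rot hn0 hm0 hI
    obtain ⟨σ, a, W, W', f1, f2, f3⟩ := IH P.length (by omega) (!ε) π' (U' ++ z :: w) P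
      (R ++ T.drop U'.length ++ [z]) y hI' (by rw [e2]; simp)
      (by rw [Bool.not_not, e1, h0]; conv_lhs => rw [hT]
          simp) rfl
    exact ⟨σ, a, W, W', e3.trans f1, f2, f3⟩

theorem rz_right_first {π π' : RPair A} (h : RightMove π π') {x : A} (hx : (π false x : ℕ) = 0) :
    (π' false x : ℕ) = 0 := by
  obtain ⟨ε, zc, zo, h1, h2, h3, h4, h5, h6⟩ := h
  cases ε
  · rw [h3]; exact hx
  · have := h4 x (by rw [Fin.le_def]; simp only [Bool.not_true]; omega)
    simp only [Bool.not_true] at this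
    rw [this]; exact hx

theorem rz_path_first {π π' : RPair A} (h : Relation.ReflTransGen RightMove π π') {x : A}
    (hx : (π false x : ℕ) = 0) : (π' false x : ℕ) = 0 := by
  induction h with
  | refl => exact hx
  | tail _ h2 ih => exact rz_right_first h2 ih

def rzEqv (π : RPair A) (b c : A) : Prop :=
  ∀ u, rzK π u → rzh (π false) u b = rzh (π false) u c

theorem rz_eqv_path {π π' : RPair A} (h : Relation.ReflTransGen RightMove π π') {b c : A}
    (hb : rzEqv π' b c) : rzEqv π b c := by
  induction h with
  | refl => exact hb
  | tail _ h2 ih =>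
    apply ih
    obtain ⟨g, -, -, hg⟩ := rz_right h2
    intro u hu
    obtain ⟨k1, k2⟩ := hg u hu
    rw [← k2 b, ← k2 c]
    exact hb _ k1

theorem rz_eqv_same [Nonempty A] (hN : 2 ≤ Fintype.card A) {π : RPair A} (hπ : PairIrreducible π)
    {S : Perm A} (hS : IsS π S) (b c : A) : rzEqv π b c ↔ S.SameCycle b c := by
  constructor
  · intro h
    classical
    let qe := Fintype.equivFin (Quotient (Equiv.Perm.SameCycle.setoid S))
    let f : A → ℝ := fun x => ((qe (Quotient.mk _ x) : ℕ) : ℝ)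
    have hf : ∀ x y, f x = f y ↔ S.SameCycle x y := by
      intro x y
      simp only [f, Nat.cast_inj, Fin.val_inj, qe.injective.eq_iff]
      exact Quotient.eq (r := Equiv.Perm.SameCycle.setoid S)
    obtain ⟨u, hu, hu2⟩ := rz_K2 hN hπ hS f
      (fun x => (hf _ _).2 (Perm.SameCycle.symm ⟨1, by simp⟩))
    have := h u hu
    rw [hu2, hu2] at this
    exact (hf b c).1 (by linarith)
  · intro h u hu
    exact rz_same_of_rel (fun x y => rzh (π false) u x = rzh (π false) u y)
      ⟨fun _ => rfl, fun h => h.symm, fun h h' => h.trans h'⟩ (fun x => (rz_K1 hS hu x).symm) h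

theorem rz_top_pos {e : A ≃ Fin (Fintype.card A)} {a : A} {W : List A} (h : rzl e = a :: W) {y : A}
    (hy : y ≠ a) : ((e y : ℕ) + 1 < Fintype.card A → (e (W.formPerm y) : ℕ) = e y + 1) ∧
      ((e y : ℕ) + 1 = Fintype.card A → (e (W.formPerm y) : ℕ) = 1) := by
  have p := rz_cons_mem (rzl_nodup _) (rzl_mem _) h
  have hl := rzl_length e
  rw [h, List.length_cons] at hl
  obtain ⟨i, hi, rfl⟩ := List.mem_iff_getElem.1 ((p.2 y).2 hy)
  have key : ∀ j (hj : j < W.length), (e W[j] : ℕ) = j + 1 := by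
    intro j hj
    rw [← rzl_idx, h, List.idxOf_cons_ne]
    · rw [p.1.idxOf_getElem]
    · exact ((p.2 _).1 (List.getElem_mem hj)).symm
  rw [List.formPerm_apply_getElem W p.1 i hi, key, key]
  constructor
  · intro h'; rw [Nat.mod_eq_of_lt (by omega)]
  · intro h'
    have : i + 1 = W.length := by omega
    rw [this, Nat.mod_self]

theorem rz_bot_pos {e : A ≃ Fin (Fintype.card A)} {a : A} {W : List A} (h : rzl e = W ++ [a]) :
    (e a : ℕ) + 1 = Fintype.card A ∧ ∀ y, y ≠ a →
    ((e y : ℕ) + 2 < Fintype.card A → (e (W.formPerm y) : ℕ) = e y + 1) ∧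
      ((e y : ℕ) + 2 = Fintype.card A → (e (W.formPerm y) : ℕ) = 0) := by
  have p := rz_concat_mem (rzl_nodup _) (rzl_mem _) h
  have hl := rzl_length e
  rw [h, List.length_append, List.length_singleton] at hl
  have haW : a ∉ W := fun h' => (p.2 a).1 h' rfl
  constructor
  · rw [← rzl_idx, h, List.idxOf_append_of_notMem haW]; simpa using hl
  intro y hy
  obtain ⟨i, hi, rfl⟩ := List.mem_iff_getElem.1 ((p.2 y).2 hy)
  have key : ∀ j (hj : j < W.length), (e W[j] : ℕ) = j := by
    intro j hj
    rw [← rzl_idx, h, List.idxOf_append_of_mem (List.getElem_mem hj), p.1.idxOf_getElem]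
  rw [List.formPerm_apply_getElem W p.1 i hi, key, key]
  constructor
  · intro h'; rw [Nat.mod_eq_of_lt (by omega)]
  · intro h'
    have : i + 1 = W.length := by omega
    rw [this, Nat.mod_self]

theorem rz_DP_SQ [Nonempty A] (hN : 2 ≤ Fintype.card A) {σ : RPair A} {a : A} {W W' : List A}
    (h0 : rzl (σ false) = a :: W) (h1 : rzl (σ true) = W' ++ [a]) :
    XOf σ = a ∧ PairIrreducible σ ∧ ∃ S, IsS σ S ∧ IsQ σ S (W.formPerm * W'.formPerm⁻¹) := by
  have ha0 : (σ false a : ℕ) = 0 := by rw [← rzl_idx, h0]; simp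
  have hX : XOf σ = a := by
    rw [XOf, Equiv.symm_apply_eq]
    exact Fin.ext ha0.symm
  obtain ⟨ha1, hbot⟩ := rz_bot_pos h1
  have p0 := rz_cons_mem (rzl_nodup _) (rzl_mem _) h0
  have p1 := rz_concat_mem (rzl_nodup _) (rzl_mem _) h1
  have c0a : W.formPerm a = a := List.formPerm_apply_of_notMem (fun h' => (p0.2 a).1 h' rfl)
  have c1a : W'.formPerm a = a := List.formPerm_apply_of_notMem (fun h' => (p1.2 a).1 h' rfl)
  have Qa : (W.formPerm * W'.formPerm⁻¹) a = a := by
    rw [Perm.mul_apply, Perm.inv_eq_iff_eq.2 c1a.symm, c0a]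
  generalize hQ : W.formPerm * W'.formPerm⁻¹ = Q at *
  set p := (σ true).symm (posFirst A) with hp
  have hpp : σ true p = posFirst A := by simp [hp]
  refine ⟨hX, ?_, Q * swap a p, ?_, ?_, ?_⟩
  · intro k hk
    have h2 := hk a (by rw [Fin.le_def]; omega)
    rw [Fin.le_def] at h2
    have := k.isLt
    omega
  · intro b
    constructor
    · intro hb
      have : b = p := by rw [hp, Equiv.eq_symm_apply]; exact hb
      rw [this, Perm.mul_apply, swap_apply_right, Qa]
      exact hX.symm
    · intro hb
      have hb0 : (σ true b : ℕ) ≠ 0 := fun h' => hb (Fin.ext h')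
      have hbp : b ≠ p := by rintro rfl; exact hb hpp
      set y := (σ true).symm ⟨(σ true b : ℕ) - 1,
              Nat.lt_of_le_of_lt (Nat.sub_le _ _) (σ true b).isLt⟩ with hy
      have hyp : (σ true y : ℕ) + 1 = σ true b := by
        rw [hy]; simp; omega
      have hblt := (σ true b).isLt
      have hya : y ≠ a := by
        intro h'; rw [h'] at hyp; omega
      have hS : (Q * swap a p) b = W.formPerm y := by
        have hc : W'.formPerm y = swap a p b := by
          by_cases hba : b = a
          · rw [hba, swap_apply_left]
            apply (σ true).injective
            rw [hpp]
            apply Fin.ext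
            exact (hbot y hya).2 (by rw [hba] at hyp; omega)
          · rw [swap_apply_of_ne_of_ne hba hbp]
            apply (σ true).injective
            apply Fin.ext
            rw [← hyp]
            apply (hbot y hya).1
            have : (σ true b : ℕ) ≠ σ true a := fun h' => hba ((σ true).injective (Fin.ext h'))
            omega
        rw [Perm.mul_apply, ← hQ, ← hc]; simp
      have hlast : (σ true).symm (posLast A) = a := by
        rw [Equiv.symm_apply_eq]
        apply Fin.ext
        simp only [posLast]; omega
      have htop := rz_top_pos h0 hya
      rw [hS, hlast, ha0]
      set l := (σ false).symm (posLast A) with hl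
      have hll : (σ false l : ℕ) + 1 = Fintype.card A := by
        rw [hl]; simp [posLast]; omega
      constructor
      · intro h2
        have : y = l := (σ true).injective (Fin.ext (by omega))
        rw [this] at htop ⊢
        simpa using htop.2 hll
      · intro h2
        apply htop.1
        have hyl : y ≠ l := by intro h3; rw [h3] at hyp; omega
        have : (σ false y : ℕ) ≠ σ false l := fun h' => hyl ((σ false).injective (Fin.ext h'))
        have := (σ false y).isLt
        omega
  · rw [hX, Qa]
  · rw [hX]
    intro b hb
    by_cases hbp : b = p
    · subst hbp
      simp [Qa]
    · rw [Perm.mul_apply, swap_apply_of_ne_of_ne hb hbp]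
      refine ⟨fun h' => ?_, fun _ => rfl⟩
      exact absurd (Q.injective (h'.trans Qa.symm)) hb

theorem rz_same_fix {Q : Perm A} {X b : A} (hX : Q X = X) (hb : b ≠ X) : ¬ Q.SameCycle b X := by
  intro h
  obtain ⟨i, hi⟩ := h.symm
  rw [Perm.zpow_apply_eq_self_of_apply_eq_self hX] at hi
  exact hb hi.symm

theorem rz_dir2 [Nonempty A] (hN : 2 ≤ Fintype.card A) {π : RPair A} (hπ : PairIrreducible π)
    {S Q : Perm A} (hS : IsS π S) (hQ : IsQ π S Q) {b c : A} (hb : b ≠ XOf π) (hc : c ≠ XOf π)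
    (hbc : ¬ Q.SameCycle b c) (hk : rzcs Q b = rzcs Q c) :
    ∃ ν ∈ renamings π, Perm.sign ν = -1 := by
  obtain ⟨T, z, hTz⟩ : ∃ T z, rzl (π false) = T ++ [z] := by
    rcases List.eq_nil_or_concat (rzl (π false)) with h | ⟨T, z, h⟩
    · have := rzl_length (π false)
      rw [h] at this; simp at this; omega
    · exact ⟨T, z, by rw [h, List.concat_eq_append]⟩
  obtain ⟨U, V, hUV⟩ := List.append_of_mem (rzl_mem (π true) z)
  obtain ⟨σ, a, W, W', r1, r2, r3⟩ := rz_step0 hN U.length false π T U V z (rz_irr_list hπ) hTz hUV rfl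
  obtain ⟨s1, s2, S', s3, s4⟩ := rz_DP_SQ hN r2 r3
  have haX : XOf π = a := by
    have h1 : (σ false (XOf π) : ℕ) = 0 := rz_path_first r1.1 (by simp [XOf, posFirst])
    rw [← s1, eq_comm, XOf, Equiv.symm_apply_eq]
    exact Fin.ext h1.symm
  have hsame : ∀ x y, x ≠ a → y ≠ a →
      ((W.formPerm * W'.formPerm⁻¹).SameCycle x y ↔ Q.SameCycle x y) := by
    intro x y hx hy
    rw [rz_same_SQ s4 (rz_SX hN s2 s3) (by rw [s1]; exact hx) (by rw [s1]; exact hy),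
      rz_same_SQ hQ (rz_SX hN hπ hS) (by rw [haX]; exact hx) (by rw [haX]; exact hy),
      ← rz_eqv_same hN s2 s3, ← rz_eqv_same hN hπ hS]
    exact ⟨rz_eqv_path r1.1, rz_eqv_path r1.2⟩
  have Q1 := hQ.1
  have Q2 := s4.1
  rw [haX] at Q1 hb hc
  rw [s1] at Q2
  have hcs : ∀ x, x ≠ a → rzcs (W.formPerm * W'.formPerm⁻¹) x = rzcs Q x := by
    intro x hx
    rw [rzcs, rzcs]
    congr 1
    ext y
    rw [Set.mem_ofPred_eq, Set.mem_ofPred_eq]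
    by_cases hy : y = a
    · subst hy
      exact iff_of_false (rz_same_fix Q2 hx) (rz_same_fix Q1 hx)
    · exact hsame x y hx hy
  obtain ⟨τ, t1, t2⟩ := rz_odd (σ := σ) ⟨W, W', r2, r3, rfl, rfl⟩ hb hc
    (by rw [hsame b c hb hc]; exact hbc) (by rw [hcs b hb, hcs c hc, hk])
  refine ⟨τ, ?_, t1⟩
  exact ((r1.reach.trans t2).trans (r1.reach.symm.rename τ)).1

end Final

/-- `G(π) ⊆ Alt(A)` if and only if `Λ(π)` is simple. -/
theorem stmt8 {A : Type*} [Fintype A] [DecidableEq A] [Nonempty A]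
    (hN : 2 ≤ Fintype.card A) (π : RPair A) (hπ : PairIrreducible π)
    (S Q : Equiv.Perm A) (hS : IsS π S) (hQ : IsQ π S Q) :
    renamings π ⊆ (alternatingGroup A : Set (Equiv.Perm A)) ↔ (lamOf Q).Nodup := by
  rw [rz_lam_nodup Q (XOf π) hQ.1]
  constructor
  · intro h b c hb hc hk
    by_contra hbc
    obtain ⟨ν, h1, h2⟩ := rz_dir2 hN hπ hS hQ hb hc hbc hk
    have h3 : ν ∈ alternatingGroup A := h h1
    rw [Equiv.Perm.mem_alternatingGroup, h2] at h3
    exact absurd h3 (by decide)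
  · intro D ν hν
    have : ν ∈ alternatingGroup A := by
      rw [Equiv.Perm.mem_alternatingGroup]
      exact rz_dir1 hN hπ hS hQ D ν hν
    exact this
end

section
/- Let k ≥ 2 and let A = {a, s₁, …, s_k, z} consist of k+2 distinct letters. Let π be the pair on A with π₀(a) = 1, π₀(s_i) = i+1 for 1 ≤ i ≤ k, π₀(z) = k+2, and π₁(z) = 1, π₁(s_i) = i+1 for 1 ≤ i ≤ k, π₁(a) = k+2. Then π is irreducible and every permutation ν of A with ν(a) = a and ν(z) = z belongs to G(π). -/
open Equiv

variable {A : Type*} [Fintype A]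

section Aux
variable [DecidableEq A]

def WordOf (l : List A) (e : A ≃ Fin (Fintype.card A)) : Prop :=
  l.Nodup ∧ (∀ x, x ∈ l) ∧ ∀ x, (e x : ℕ) = l.idxOf x

lemma wordOf_of_getElem (l : List A) (e : A ≃ Fin (Fintype.card A))
    (hl : l.length = Fintype.card A) (h : ∀ x, l[(e x : ℕ)]? = some x) : WordOf l e := by
  have hm : ∀ x, x ∈ l := fun x => List.mem_of_getElem? (h x)
  have hn : l.Nodup := by
    have h1 : l.toFinset = Finset.univ := by ext x; simp [hm x]
    have h2 : l.toFinset.card = l.length := by rw [h1, hl]; rfl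
    exact Multiset.toFinset_card_eq_card_iff_nodup.mp h2
  refine ⟨hn, hm, fun x => ?_⟩
  obtain ⟨hlt, hx⟩ := List.getElem?_eq_some_iff.mp (h x)
  have := hn.idxOf_getElem (e x : ℕ) hlt
  rw [hx] at this
  exact this.symm

lemma WordOf.length {l : List A} {e : A ≃ Fin (Fintype.card A)} (h : WordOf l e) :
    l.length = Fintype.card A := by
  have h1 : l.toFinset = Finset.univ := by ext x; simp [h.2.1 x]
  rw [← List.toFinset_card_of_nodup h.1, h1]; rfl

lemma exists_word (l : List A) (h1 : l.Nodup) (h2 : ∀ x, x ∈ l) :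
    ∃ e : A ≃ Fin (Fintype.card A), WordOf l e := by
  have hlen : l.length = Fintype.card A := by
    have h3 : l.toFinset = Finset.univ := by ext x; simp [h2 x]
    rw [← List.toFinset_card_of_nodup h1, h3]; rfl
  refine ⟨(h1.getEquivOfForallMemList l h2).symm.trans (finCongr hlen), h1, h2, fun x => ?_⟩
  simp

lemma WordOf.unique {l : List A} {e e' : A ≃ Fin (Fintype.card A)} (h : WordOf l e)
    (h' : WordOf l e') : e = e' := by
  ext x
  rw [h.2.2, h'.2.2]

def Reach (T B T' B' : List A) : Prop :=
  ∀ π : RPair A, WordOf T (π false) → WordOf B (π true) →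
    ∃ π' : RPair A, WordOf T' (π' false) ∧ WordOf B' (π' true) ∧ π' ∈ EClass π

lemma Reach.refl (T B : List A) : Reach T B T B :=
  fun π h1 h2 => ⟨π, h1, h2, Relation.ReflTransGen.refl⟩

lemma Reach.trans {T B T' B' T'' B'' : List A} (h : Reach T B T' B') (h' : Reach T' B' T'' B'') :
    Reach T B T'' B'' := by
  intro π h1 h2
  obtain ⟨π', a1, a2, a3⟩ := h π h1 h2
  obtain ⟨π'', b1, b2, b3⟩ := h' π' a1 a2
  exact ⟨π'', b1, b2, Relation.ReflTransGen.trans a3 b3⟩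

lemma stepR (ε : Bool) (u p q : List A) (c o : A) (π : RPair A)
    (h1 : WordOf (u ++ [c]) (π ε)) (h2 : WordOf (p ++ c :: (q ++ [o])) (π (!ε))) :
    ∃ π' : RPair A, π' ε = π ε ∧ WordOf (p ++ c :: o :: q) (π' (!ε)) ∧ RightMove π π' := by
  have hperm : (p ++ c :: o :: q).Perm (p ++ c :: (q ++ [o])) := by
    refine List.Perm.append_left _ (List.Perm.cons _ ?_)
    exact (List.perm_append_singleton o q).symm
  obtain ⟨e, he⟩ := exists_word (p ++ c :: o :: q) (hperm.nodup_iff.mpr h2.1)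
    (fun x => hperm.mem_iff.mpr (h2.2.1 x))
  have k1 : (fun b => if b = ε then π ε else e : RPair A) ε = π ε := by simp
  have k2 : (fun b => if b = ε then π ε else e : RPair A) (!ε) = e := by simp
  generalize (fun b => if b = ε then π ε else e : RPair A) = π' at k1 k2
  refine ⟨π', k1, k2 ▸ he, ε, c, o, ?_, ?_, k1, ?_, ?_, ?_⟩
  · intro x
    rw [Fin.le_def, h1.2.2, h1.2.2]
    have n1 := h1.1
    have m1 := h1.2.1 x
    have := List.idxOf_lt_length_of_mem m1
    have : List.idxOf c (u ++ [c]) = u.length := by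
      rw [List.idxOf_append_of_notMem (by grind)]; simp
    grind
  · intro x
    rw [Fin.le_def, h2.2.2, h2.2.2]
    have n1 := h2.1
    have := List.idxOf_lt_length_of_mem (h2.2.1 x)
    have : List.idxOf o (p ++ c :: (q ++ [o])) = p.length + q.length + 1 := by
      have : p ++ c :: (q ++ [o]) = (p ++ c :: q) ++ [o] := by simp
      rw [this, List.idxOf_append_of_notMem (by grind)]; simp; omega
    grind
  · intro b hb
    rw [Fin.le_def, h2.2.2, h2.2.2] at hb
    rw [Fin.ext_iff, k2, he.2.2, h2.2.2]
    have n1 := h2.1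
    grind [List.idxOf_append, List.idxOf_cons]
  · rw [k2, he.2.2, h2.2.2]
    have n1 := h2.1
    grind [List.idxOf_append, List.idxOf_cons]
  · intro b hb hbo
    rw [Fin.le_def, h2.2.2, h2.2.2] at hb
    rw [k2, he.2.2, h2.2.2]
    have n1 := h2.1
    have := h2.2.1 b
    grind [List.idxOf_append, List.idxOf_cons]

lemma stepL (ε : Bool) (u p q : List A) (c o : A) (π : RPair A)
    (h1 : WordOf (c :: u) (π ε)) (h2 : WordOf (o :: q ++ c :: p) (π (!ε))) :
    ∃ π' : RPair A, π' ε = π ε ∧ WordOf (q ++ o :: c :: p) (π' (!ε)) ∧ LeftMove π π' := by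
  have hperm : (q ++ o :: c :: p).Perm (o :: q ++ c :: p) := by
    simpa using List.perm_middle
  obtain ⟨e, he⟩ := exists_word (q ++ o :: c :: p) (hperm.nodup_iff.mpr h2.1)
    (fun x => hperm.mem_iff.mpr (h2.2.1 x))
  have k1 : (fun b => if b = ε then π ε else e : RPair A) ε = π ε := by simp
  have k2 : (fun b => if b = ε then π ε else e : RPair A) (!ε) = e := by simp
  generalize (fun b => if b = ε then π ε else e : RPair A) = π' at k1 k2
  refine ⟨π', k1, k2 ▸ he, ε, c, o, ?_, ?_, k1, ?_, ?_, ?_⟩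
  · intro x
    rw [Fin.le_def, h1.2.2, h1.2.2]
    simp
  · intro x
    rw [Fin.le_def, h2.2.2, h2.2.2]
    simp
  · intro b hb
    rw [Fin.le_def, h2.2.2, h2.2.2] at hb
    rw [Fin.ext_iff, k2, he.2.2, h2.2.2]
    have n1 := h2.1
    have := List.idxOf_lt_length_of_mem (a := b) (l := q)
    grind [List.idxOf_append, List.idxOf_cons]
  · rw [k2, he.2.2, h2.2.2]
    have n1 := h2.1
    grind [List.idxOf_append, List.idxOf_cons]
  · intro b hb hbo
    rw [Fin.le_def, h2.2.2, h2.2.2] at hb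
    rw [k2, he.2.2, h2.2.2]
    have n1 := h2.1
    have := h2.2.1 b
    have := List.idxOf_lt_length_of_mem (a := b) (l := q)
    grind [List.idxOf_append, List.idxOf_cons]

lemma R0 (u p q r : List A) (c : A) :
    Reach (u ++ [c]) (p ++ c :: (q ++ r)) (u ++ [c]) (p ++ c :: (r ++ q)) := by
  induction r using List.reverseRecOn generalizing q with
  | nil => simpa using Reach.refl _ _
  | append_singleton r o ih =>
    have h := ih (o :: q)
    have h' : Reach (u ++ [c]) (p ++ c :: (q ++ (r ++ [o])))
        (u ++ [c]) (p ++ c :: ((o :: q) ++ r)) := by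
      intro π h1 h2
      obtain ⟨π', a1, a2, a3⟩ := stepR false u p (q ++ r) c o π h1 (by simpa using h2)
      exact ⟨π', a1 ▸ h1, by simpa using a2, Relation.ReflTransGen.single (Or.inl a3)⟩
    simpa using h'.trans h

lemma R1 (u p q r : List A) (c : A) :
    Reach (p ++ c :: (q ++ r)) (u ++ [c]) (p ++ c :: (r ++ q)) (u ++ [c]) := by
  induction r using List.reverseRecOn generalizing q with
  | nil => simpa using Reach.refl _ _
  | append_singleton r o ih =>
    have h := ih (o :: q)
    have h' : Reach (p ++ c :: (q ++ (r ++ [o]))) (u ++ [c])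
        (p ++ c :: ((o :: q) ++ r)) (u ++ [c]) := by
      intro π h2 h1
      obtain ⟨π', a1, a2, a3⟩ := stepR true u p (q ++ r) c o π h1 (by simpa using h2)
      exact ⟨π', by simpa using a2, a1 ▸ h1, Relation.ReflTransGen.single (Or.inl a3)⟩
    simpa using h'.trans h

lemma L0 (u p q r : List A) (c : A) :
    Reach (c :: u) ((q ++ r) ++ c :: p) (c :: u) ((r ++ q) ++ c :: p) := by
  induction q generalizing r with
  | nil => simpa using Reach.refl _ _
  | cons o q ih =>
    have h := ih (r ++ [o])
    have h' : Reach (c :: u) ((o :: q ++ r) ++ c :: p)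
        (c :: u) ((q ++ (r ++ [o])) ++ c :: p) := by
      intro π h1 h2
      obtain ⟨π', a1, a2, a3⟩ := stepL false u p (q ++ r) c o π h1 (by simpa using h2)
      exact ⟨π', a1 ▸ h1, by simpa using a2, Relation.ReflTransGen.single (Or.inr a3)⟩
    simpa using h'.trans h

lemma L1 (u p q r : List A) (c : A) :
    Reach ((q ++ r) ++ c :: p) (c :: u) ((r ++ q) ++ c :: p) (c :: u) := by
  induction q generalizing r with
  | nil => simpa using Reach.refl _ _
  | cons o q ih =>
    have h := ih (r ++ [o])
    have h' : Reach ((o :: q ++ r) ++ c :: p) (c :: u)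
        ((q ++ (r ++ [o])) ++ c :: p) (c :: u) := by
      intro π h2 h1
      obtain ⟨π', a1, a2, a3⟩ := stepL true u p (q ++ r) c o π h1 (by simpa using h2)
      exact ⟨π', by simpa using a2, a1 ▸ h1, Relation.ReflTransGen.single (Or.inr a3)⟩
    simpa using h'.trans h

def SR (a z : A) (X Y : List A) : Prop :=
  Reach (a :: (X ++ [z])) (z :: (X ++ [a])) (a :: (Y ++ [z])) (z :: (Y ++ [a]))

lemma SR.trans {a z : A} {X Y Z : List A} (h : SR a z X Y) (h' : SR a z Y Z) : SR a z X Z :=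
  Reach.trans h h'

lemma SR_swap (a z x y : A) (Q : List A) : SR a z (x :: y :: Q) (y :: x :: Q) := by
  have e1 := R0 (a :: x :: y :: Q) [] [x] (y :: Q ++ [a]) z
  have e2 := R1 (z :: y :: Q ++ [a]) [a] [y] (Q ++ [z]) x
  have e3 := R0 (a :: x :: Q ++ [z]) [z] (Q ++ [a]) [x] y
  have e4 := R1 (z :: y :: x :: Q) [] (x :: Q ++ [z]) [y] a
  simp only [List.nil_append, List.cons_append, List.append_assoc] at e1 e2 e3 e4
  exact ((e1.trans e2).trans e3).trans e4

lemma SR_cycle (a z x : A) (Q : List A) : SR a z (x :: Q) (Q ++ [x]) := by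
  cases Q with
  | nil => exact Reach.refl _ _
  | cons y Q =>
    have e1 := L0 (x :: y :: Q ++ [z]) [] [z, x] (y :: Q) a
    have e2 := L1 (Q ++ [z, x, a]) (Q ++ [z]) [a] [x] y
    have e3 := L0 (a :: y :: Q ++ [z]) [a] (y :: Q) [z] x
    have e4 := L1 (y :: Q ++ [x, a]) [] [x] (a :: y :: Q) z
    simp only [List.nil_append, List.cons_append, List.append_assoc] at e1 e2 e3 e4
    simpa [SR] using ((e1.trans e2).trans e3).trans e4

lemma SR_rot (a z : A) (P Q : List A) : SR a z (P ++ Q) (Q ++ P) := by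
  induction P generalizing Q with
  | nil => simpa [SR] using Reach.refl _ _
  | cons x P ih =>
    have h1 := SR_cycle a z x (P ++ Q)
    have h2 := ih (Q ++ [x])
    simp only [List.append_assoc, List.cons_append, List.nil_append] at h1 h2 ⊢
    exact h1.trans h2

lemma SR_perm (a z : A) {L L' : List A} (h : L.Perm L') (P : List A) :
    SR a z (P ++ L) (P ++ L') := by
  induction h generalizing P with
  | nil => exact Reach.refl _ _
  | cons x _ ih => simpa using ih (P ++ [x])
  | swap x y l =>
    have h1 := SR_rot a z P (y :: x :: l)
    have h2 := SR_swap a z y x (l ++ P)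
    have h3 := SR_rot a z (x :: y :: l) P
    exact (h1.trans h2).trans h3
  | trans _ _ ih1 ih2 => exact (ih1 P).trans (ih2 P)

lemma wordOf_map (l : List A) (e : A ≃ Fin (Fintype.card A)) (ν : Equiv.Perm A)
    (h : WordOf l e) : WordOf (l.map ν.symm) (ν.trans e) := by
  apply wordOf_of_getElem
  · simpa using h.length
  · intro x
    have : l[l.idxOf (ν x)]? = some (ν x) := List.getElem?_idxOf (h.2.1 _)
    simp [h.2.2, this]

end Aux

/-- for `A = {a, s₁, …, s_k, z}` (k+2 distinct letters) and the pair
`π₀ : a s₁ … s_k z`, `π₁ : z s₁ … s_k a` (positions written 0-indexed),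
`π` is irreducible and every permutation fixing `a` and `z` is a renaming.
Here `s i` denotes `s_{i+1}`. -/
theorem stmt9 {A : Type*} [Fintype A] [DecidableEq A] [Nonempty A]
    (k : ℕ) (hk : 2 ≤ k) (a z : A) (s : Fin k → A)
    (hcard : Fintype.card A = k + 2)
    (π : RPair A)
    (h0a : (π false a : ℕ) = 0)
    (h0s : ∀ i : Fin k, (π false (s i) : ℕ) = (i : ℕ) + 1)
    (h0z : (π false z : ℕ) = k + 1)
    (h1z : (π true z : ℕ) = 0)
    (h1s : ∀ i : Fin k, (π true (s i) : ℕ) = (i : ℕ) + 1)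
    (h1a : (π true a : ℕ) = k + 1) :
    PairIrreducible π ∧
      ∀ ν : Equiv.Perm A, ν a = a → ν z = z → ν ∈ renamings π := by
  have hsurj : ∀ x, x = a ∨ x = z ∨ ∃ i, x = s i := by
    intro x
    have hx := (π false x).isLt
    by_cases h1 : (π false x : ℕ) = 0
    · left; exact (π false).injective (Fin.ext (by omega))
    by_cases h2 : (π false x : ℕ) = k + 1
    · right; left; exact (π false).injective (Fin.ext (by omega))
    right; right
    refine ⟨⟨(π false x : ℕ) - 1, by omega⟩, (π false).injective (Fin.ext ?_)⟩
    rw [h0s]; simp; omega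
  refine ⟨?_, ?_⟩
  · intro j hj
    have := hj a (by rw [Fin.le_def, h0a]; omega)
    rw [Fin.le_def, h1a] at this
    have := j.isLt
    omega
  intro ν ha hz
  have wT : WordOf (a :: (List.ofFn s ++ [z])) (π false) := by
    apply wordOf_of_getElem
    · simp [hcard]
    · intro x
      rcases hsurj x with rfl | rfl | ⟨i, rfl⟩
      · simp [h0a]
      · simp [h0z]
      · simp [h0s, List.getElem?_append]
  have wB : WordOf (z :: (List.ofFn s ++ [a])) (π true) := by
    apply wordOf_of_getElem
    · simp [hcard]
    · intro x
      rcases hsurj x with rfl | rfl | ⟨i, rfl⟩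
      · simp [h1a]
      · simp [h1z]
      · simp [h1s, List.getElem?_append]
  have wT' := wordOf_map _ _ ν wT
  have wB' := wordOf_map _ _ ν wB
  have ha' : ν.symm a = a := by rw [Equiv.symm_apply_eq, ha]
  have hz' : ν.symm z = z := by rw [Equiv.symm_apply_eq, hz]
  rw [List.map_cons, List.map_append, List.map_singleton, ha', hz'] at wT' wB'
  have hp : (List.ofFn s).Perm ((List.ofFn s).map ν.symm) := by
    have p1 : (a :: (List.ofFn s ++ [z])).Perm (a :: ((List.ofFn s).map ν.symm ++ [z])) :=
      (List.perm_ext_iff_of_nodup wT.1 wT'.1).mpr fun x => by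
        constructor
        · intro _; exact wT'.2.1 x
        · intro _; exact wT.2.1 x
    exact (List.perm_append_right_iff _).mp p1.cons_inv
  obtain ⟨π', b1, b2, b3⟩ := SR_perm a z hp [] π wT wB
  have : pairRename π ν = π' := by
    funext ε
    cases ε
    · exact wT'.unique b1
    · exact wB'.unique b2
  show pairRename π ν ∈ EClass π
  rw [this]; exact b3
end
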